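/- arXiv:1909.06542 — 2 statements merged into one kernel-verified Lean document; each statement's English description precedes it below -/
import Mathlib

section
/- Let B ≥ 1 and let u : ℝ → ℝ be 1-periodic with |u(x)| ≤ 1 for all x, and suppose u admits an extension ũ to the strip {z ∈ ℂ : |Im z| < 1} that is subharmonic there and satisfies |ũ(z)| ≤ B. Then there is an absolute constant C such that the Fourier coefficients û(k) = ∫₀¹ u(x)·e^{−2πikx} dx satisfy |û(k)| ≤ C·B/|k| for all k ∈ ℤ \ {0}. -/
open MeasureTheory

/-- A continuous function on an open set `U ⊆ ℂ` is subharmonic if its value at the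
center of any closed disk contained in `U` is at most its average over the boundary
circle. -/
def Subharmonic (U : Set ℂ) (w : ℂ → ℝ) : Prop :=
  ContinuousOn w U ∧
    ∀ z₀ : ℂ, ∀ r : ℝ, 0 < r → Metric.closedBall z₀ r ⊆ U →
      w z₀ ≤ (2 * Real.pi)⁻¹ *
        ∫ t in (0:ℝ)..(2 * Real.pi), w (z₀ + r * Complex.exp (t * Complex.I))

namespace FCB
open Real Set

noncomputable def chi (x : ℝ) : ℝ := Real.smoothTransition (x + 1) - Real.smoothTransition x

lemma chi_neg {x : ℝ} (h : x ≤ 0) : chi x = Real.smoothTransition (x + 1) := by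
  simp [chi, Real.smoothTransition.zero_of_nonpos h]

lemma chi_pos {x : ℝ} (h : 0 ≤ x) : chi x = 1 - Real.smoothTransition x := by
  rw [chi, Real.smoothTransition.one_of_one_le (by linarith)]

lemma chi_nonneg (x : ℝ) : 0 ≤ chi x := by
  rcases le_total x 0 with h | h
  · rw [chi_neg h]; exact Real.smoothTransition.nonneg _
  · rw [chi_pos h]; linarith [Real.smoothTransition.le_one x]

lemma chi_le_one (x : ℝ) : chi x ≤ 1 := by
  unfold chi; linarith [Real.smoothTransition.le_one (x+1), Real.smoothTransition.nonneg x]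

lemma chi_abs (x : ℝ) : |chi x| ≤ 1 := by
  rw [abs_of_nonneg (chi_nonneg x)]; exact chi_le_one x

lemma chi_zero : chi 0 = 1 := by
  rw [chi_pos le_rfl, Real.smoothTransition.zero_of_nonpos le_rfl]; norm_num

lemma chi_eq_zero {x : ℝ} (h : 1 ≤ |x|) : chi x = 0 := by
  rcases le_total x 0 with h0 | h0
  · rw [abs_of_nonpos h0] at h
    rw [chi_neg h0, Real.smoothTransition.zero_of_nonpos (by linarith)]
  · rw [abs_of_nonneg h0] at h
    rw [chi_pos h0, Real.smoothTransition.one_of_one_le h, sub_self]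

lemma chi_contDiff (n : ℕ∞) : ContDiff ℝ n chi := by
  unfold chi
  exact (Real.smoothTransition.contDiff.comp (contDiff_id.add contDiff_const)).sub
    Real.smoothTransition.contDiff

lemma chi_cont : Continuous chi := (chi_contDiff 0).continuous

@[fun_prop] lemma chi_cont' : Continuous chi := chi_cont

lemma chi_supp : HasCompactSupport chi := by
  refine HasCompactSupport.intro (isCompact_Icc (a := (-1:ℝ)) (b := 1)) ?_
  intro x hx
  apply chi_eq_zero
  by_contra hc
  push Not at hc
  exact hx ⟨by linarith [(abs_lt.1 hc).1], by linarith [(abs_lt.1 hc).2]⟩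

lemma chi_bounds : ∃ L : ℝ, 1 ≤ L ∧ (∀ x h : ℝ, |chi (x + h) - chi x| ≤ L * |h|) ∧
    (∀ x h : ℝ, |chi (x + h) + chi (x - h) - 2 * chi x| ≤ L * h ^ 2) := by
  obtain ⟨C1, h1⟩ := (chi_contDiff 1).lipschitzWith_of_hasCompactSupport chi_supp (by simp)
  have hd : ContDiff ℝ 1 (deriv chi) := by
    have : ContDiff ℝ ((1:ℕ∞) + 1) chi := by
      have := chi_contDiff 2
      convert this using 1; norm_num
    exact (contDiff_succ_iff_deriv.1 this).2.2
  obtain ⟨C2, h2⟩ := hd.lipschitzWith_of_hasCompactSupport chi_supp.deriv (by simp)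
  have hdiff : Differentiable ℝ chi := (chi_contDiff 1).differentiable (by simp)
  refine ⟨1 + C1 + 2 * C2, by have := C1.2; have := C2.2; simp only [NNReal.val_eq_coe] at *; linarith, ?_, ?_⟩
  · intro x h
    have := h1.dist_le_mul (x + h) x
    simp only [Real.dist_eq, add_sub_cancel_left] at this
    have h3 := C2.2
    have h4 := abs_nonneg h
    simp only [NNReal.val_eq_coe] at *
    nlinarith [mul_nonneg h3 h4]
  · intro x h
    have key := (convex_uIcc (𝕜 := ℝ) 0 h).norm_image_sub_le_of_norm_hasDerivWithin_le
      (f := fun s => chi (x + s) + chi (x - s)) (f' := fun s => deriv chi (x + s) - deriv chi (x - s))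
      (s := uIcc 0 h) (x := 0) (y := h) (C := 2 * C2 * |h|) ?_ ?_ left_mem_uIcc right_mem_uIcc
    · simp only [add_zero, sub_zero, Real.norm_eq_abs] at key
      have e : chi (x + h) + chi (x - h) - 2 * chi x = chi (x + h) + chi (x - h) - (chi x + chi x) := by ring
      rw [e]
      refine key.trans ?_
      have h3 := C1.2
      simp only [NNReal.val_eq_coe] at *
      rw [← sq_abs h]
      nlinarith [mul_nonneg h3 (sq_nonneg |h|), sq_nonneg |h|]
    · intro s _
      apply HasDerivAt.hasDerivWithinAt
      have a1 := (hdiff (x + s)).hasDerivAt.comp s ((hasDerivAt_id s).const_add x)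
      have a2 := (hdiff (x - s)).hasDerivAt.comp s ((hasDerivAt_id s).const_sub x)
      convert a1.add a2 using 1
      · rfl
      · ring
    · intro s hs
      have := h2.dist_le_mul (x + s) (x - s)
      simp only [Real.dist_eq] at this
      rw [Real.norm_eq_abs]
      refine this.trans ?_
      have e : x + s - (x - s) = 2 * s := by ring
      rw [e, abs_mul, abs_two]
      have hs' : |s| ≤ |h| := by
        have := abs_sub_left_of_mem_uIcc hs
        simpa using this
      have h3 := C2.2
      simp only [NNReal.val_eq_coe] at *
      nlinarith [mul_le_mul_of_nonneg_left hs' h3]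

noncomputable def psi (p : ℝ × ℝ) : ℝ := chi p.1 * chi (2 * p.2)

@[fun_prop] lemma psi_cont : Continuous psi := by unfold psi; fun_prop

lemma psi_nonneg (p : ℝ × ℝ) : 0 ≤ psi p := mul_nonneg (chi_nonneg _) (chi_nonneg _)

lemma psi_eq_zero {p : ℝ × ℝ} (h : p ∉ Icc (-1:ℝ) 1 ×ˢ Icc (-1/2:ℝ) (1/2)) : psi p = 0 := by
  unfold psi
  by_cases h1 : 1 ≤ |p.1|
  · rw [chi_eq_zero h1, zero_mul]
  by_cases h2 : 1 ≤ |2 * p.2|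
  · rw [chi_eq_zero h2, mul_zero]
  exfalso; apply h
  push Not at h1 h2
  rw [abs_lt] at h1 h2
  refine ⟨⟨?_, ?_⟩, ⟨?_, ?_⟩⟩ <;> linarith

lemma psi_bounds : ∃ L : ℝ, 1 ≤ L ∧ ∀ r : ℝ, 0 ≤ r → ∀ p h : ℝ × ℝ, |h.1| ≤ r → |h.2| ≤ r →
    |psi (p + h) - psi p| ≤ L * r ∧ |psi (p + h) + psi (p - h) - 2 * psi p| ≤ L * r ^ 2 := by
  obtain ⟨L, hL, l1, l2⟩ := chi_bounds
  refine ⟨5 * L + 8 * L ^ 2, by nlinarith, ?_⟩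
  intro r hr p h hh1 hh2
  set x := p.1
  set y := 2 * p.2
  have e1 : psi (p + h) = chi (x + h.1) * chi (y + 2 * h.2) := by
    simp only [psi, Prod.fst_add, Prod.snd_add, x, y]; ring_nf
  have e2 : psi (p - h) = chi (x - h.1) * chi (y - 2 * h.2) := by
    simp only [psi, Prod.fst_sub, Prod.snd_sub, x, y]; ring_nf
  have e0 : psi p = chi x * chi y := rfl
  have hk : |2 * h.2| ≤ 2 * r := by rw [abs_mul, abs_two]; linarith
  have A1 : |chi (x + h.1) - chi x| ≤ L * r :=
    (l1 _ _).trans (by gcongr)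
  have A2 : |chi (y + 2 * h.2) - chi y| ≤ L * (2 * r) :=
    (l1 _ _).trans (by gcongr)
  have A1' : |chi (x - h.1) - chi x| ≤ L * r := by
    have := l1 x (-h.1)
    rw [abs_neg, ← sub_eq_add_neg] at this
    exact this.trans (by gcongr)
  have A2' : |chi (y - 2 * h.2) - chi y| ≤ L * (2 * r) := by
    have := l1 y (-(2 * h.2))
    rw [abs_neg, ← sub_eq_add_neg] at this
    exact this.trans (by gcongr)
  have B1 : |chi (x + h.1) + chi (x - h.1) - 2 * chi x| ≤ L * r ^ 2 := by
    refine (l2 _ _).trans ?_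
    rw [← sq_abs]; gcongr
  have B2 : |chi (y + 2 * h.2) + chi (y - 2 * h.2) - 2 * chi y| ≤ L * (2 * r) ^ 2 := by
    refine (l2 _ _).trans ?_
    rw [← sq_abs]; gcongr
  have m : ∀ {a b A B : ℝ}, |a| ≤ A → |b| ≤ B → |a * b| ≤ A * B := by
    intro a b A B h1 h2
    rw [abs_mul]; exact mul_le_mul h1 h2 (abs_nonneg _) ((abs_nonneg _).trans h1)
  constructor
  · rw [e1, e0]
    have e : chi (x + h.1) * chi (y + 2 * h.2) - chi x * chi y =
      (chi (x + h.1) - chi x) * chi (y + 2 * h.2) + chi x * (chi (y + 2 * h.2) - chi y) := by ring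
    rw [e]
    refine (abs_add_le _ _).trans ((add_le_add (m A1 (chi_abs _)) (m (chi_abs _) A2)).trans ?_)
    nlinarith [mul_nonneg (sq_nonneg L) hr, mul_nonneg (by linarith : 0 ≤ L) hr]
  · rw [e1, e2, e0]
    have e : chi (x + h.1) * chi (y + 2 * h.2) + chi (x - h.1) * chi (y - 2 * h.2) - 2 * (chi x * chi y) =
      chi x * (chi (y + 2 * h.2) + chi (y - 2 * h.2) - 2 * chi y)
      + (chi (x + h.1) + chi (x - h.1) - 2 * chi x) * chi y
      + (chi (x + h.1) - chi x) * (chi (y + 2 * h.2) - chi y)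
      + (chi (x - h.1) - chi x) * (chi (y - 2 * h.2) - chi y) := by ring
    rw [e]
    have t1 := m (chi_abs x) B2
    have t2 := m B1 (chi_abs y)
    have t3 := m A1 A2
    have t4 := m A1' A2'
    refine (abs_add_le _ _).trans ?_
    refine (add_le_add (abs_add_three _ _ _) le_rfl).trans ?_
    nlinarith [mul_nonneg (sq_nonneg L) (sq_nonneg r), mul_nonneg (by linarith : 0 ≤ L) (sq_nonneg r)]

noncomputable def E (a θ : ℝ) (p : ℝ × ℝ) : ℝ := cos (a * p.1 + θ) * exp (-(a * |p.2|))

@[fun_prop] lemma E_cont (a θ : ℝ) : Continuous (E a θ) := by unfold E; fun_prop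

lemma E_abs {a : ℝ} (θ : ℝ) (p : ℝ × ℝ) : |E a θ p| ≤ exp (-(a * |p.2|)) := by
  unfold E
  rw [abs_mul, abs_of_pos (exp_pos _)]
  exact mul_le_of_le_one_left (exp_pos _).le (abs_cos_le_one _)

lemma E_abs_one {a : ℝ} (θ : ℝ) (ha : 0 < a) (p : ℝ × ℝ) : |E a θ p| ≤ 1 :=
  (E_abs θ p).trans (by rw [exp_le_one_iff]; have := abs_nonneg p.2; nlinarith)

lemma E_lip {a r : ℝ} (θ : ℝ) (ha : 0 < a) (har : a * r ≤ 1) (p h : ℝ × ℝ) (h1 : |h.1| ≤ r)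
    (h2 : |h.2| ≤ r) : |E a θ (p + h) - E a θ p| ≤ 5 * (a * r) * exp (-(a * |p.2|)) := by
  have hr : 0 ≤ r := (abs_nonneg _).trans h1
  set s : ℝ := a * |p.2| - a * |p.2 + h.2| with hs
  have hs1 : |s| ≤ a * r := by
    rw [hs, ← mul_sub, abs_mul, abs_of_pos ha]
    gcongr
    refine (abs_abs_sub_abs_le_abs_sub _ _).trans ?_
    simpa using h2
  have e1 : exp (-(a * |p.2 + h.2|)) = exp s * exp (-(a * |p.2|)) := by
    rw [← exp_add]; congr 1; rw [hs]; ring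
  have hx := Real.abs_exp_sub_one_le (hs1.trans har)
  have hes : exp s ≤ 3 := by
    have := (abs_le.1 hx).2
    linarith [hs1.trans har]
  have e2 : E a θ (p + h) - E a θ p = ((cos (a * (p.1 + h.1) + θ) - cos (a * p.1 + θ)) * exp s
      + cos (a * p.1 + θ) * (exp s - 1)) * exp (-(a * |p.2|)) := by
    simp only [E, Prod.fst_add, Prod.snd_add, e1]; ring
  rw [e2, abs_mul, abs_of_pos (exp_pos (-(a * |p.2|)))]
  gcongr
  have c1 : |cos (a * (p.1 + h.1) + θ) - cos (a * p.1 + θ)| ≤ a * r := by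
    refine (abs_cos_sub_cos_le _ _).trans ?_
    have : a * (p.1 + h.1) + θ - (a * p.1 + θ) = a * h.1 := by ring
    rw [this, abs_mul, abs_of_pos ha]; gcongr
  refine (abs_add_le _ _).trans ?_
  rw [abs_mul, abs_mul, abs_of_pos (exp_pos s)]
  have c2 := abs_cos_le_one (a * p.1 + θ)
  have c3 : |cos (a * (p.1 + h.1) + θ) - cos (a * p.1 + θ)| * exp s ≤ (a * r) * 3 :=
    mul_le_mul c1 hes (exp_pos _).le (by positivity)
  have c4 : |cos (a * p.1 + θ)| * |exp s - 1| ≤ 1 * (2 * (a * r)) :=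
    mul_le_mul c2 (hx.trans (by linarith)) (abs_nonneg _) (by norm_num)
  linarith

noncomputable def hv (r t : ℝ) : ℝ × ℝ := (r * cos t, r * sin t)

@[fun_prop] lemma hv_cont (r : ℝ) : Continuous (hv r) := by unfold hv; fun_prop

lemma hv_fst {r : ℝ} (hr : 0 ≤ r) (t : ℝ) : |(hv r t).1| ≤ r := by
  simp only [hv, abs_mul, abs_of_nonneg hr]
  exact mul_le_of_le_one_right hr (abs_cos_le_one _)

lemma hv_snd {r : ℝ} (hr : 0 ≤ r) (t : ℝ) : |(hv r t).2| ≤ r := by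
  simp only [hv, abs_mul, abs_of_nonneg hr]
  exact mul_le_of_le_one_right hr (abs_sin_le_one _)

lemma shift (f : ℝ × ℝ → ℝ) (p : ℝ × ℝ) (r : ℝ) :
    ∫ t in (0:ℝ)..(2 * π), f (p - hv r t) = ∫ t in (0:ℝ)..(2 * π), f (p + hv r t) := by
  have e : ∀ t, f (p - hv r t) = f (p + hv r (t + π)) := by
    intro t; congr 1; ext <;> simp [hv] <;> ring
  simp_rw [e]
  rw [intervalIntegral.integral_comp_add_right (fun t => f (p + hv r t))]
  have hp : Function.Periodic (fun t => f (p + hv r t)) (2 * π) := by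
    intro t; simp [hv]
  have := hp.intervalIntegral_add_eq π 0
  simp only [zero_add] at this ⊢
  rw [← this, add_comm]

lemma integ (f : ℝ × (ℝ × ℝ) → ℝ) (hf : Continuous f) (K : Set (ℝ × ℝ)) (hK : IsCompact K)
    (h0 : ∀ t p, p ∉ K → f (t, p) = 0) :
    Integrable f ((volume.restrict (Ioc 0 (2 * π))).prod volume) := by
  have h1 : IntegrableOn f (Icc 0 (2 * π) ×ˢ K) (volume.prod volume) :=
    hf.continuousOn.integrableOn_compact (isCompact_Icc.prod hK)
  have h2 : IntegrableOn f (Ioc 0 (2 * π) ×ˢ K) (volume.prod volume) :=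
    h1.mono_set (prod_mono Ioc_subset_Icc_self le_rfl)
  rw [IntegrableOn, ← Measure.prod_restrict] at h2
  have h3 : IntegrableOn f (univ ×ˢ K) ((volume.restrict (Ioc 0 (2 * π))).prod volume) := by
    rw [IntegrableOn, ← Measure.prod_restrict, Measure.restrict_univ]; exact h2
  refine (integrableOn_iff_integrable_of_support_subset ?_).1 h3
  rintro ⟨t, p⟩ h
  refine ⟨mem_univ _, ?_⟩
  by_contra hc
  exact h (h0 t p hc)

lemma swap (f : ℝ × (ℝ × ℝ) → ℝ) (hf : Continuous f) (K : Set (ℝ × ℝ)) (hK : IsCompact K)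
    (h0 : ∀ t p, p ∉ K → f (t, p) = 0) :
    ∫ t in (0:ℝ)..(2 * π), ∫ p, f (t, p) = ∫ p, ∫ t in (0:ℝ)..(2 * π), f (t, p) := by
  simp_rw [intervalIntegral.integral_of_le two_pi_pos.le]
  exact integral_integral_swap (f := fun t p => f (t, p)) (integ f hf K hK h0)

lemma interv (f : ℝ × (ℝ × ℝ) → ℝ) (hf : Continuous f) (K : Set (ℝ × ℝ)) (hK : IsCompact K)
    (h0 : ∀ t p, p ∉ K → f (t, p) = 0) :
    IntervalIntegrable (fun t => ∫ p, f (t, p)) volume 0 (2 * π) := by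
  rw [intervalIntegrable_iff_integrableOn_Ioc_of_le two_pi_pos.le]
  exact (integ f hf K hK h0).integral_prod_left

lemma integ1 (f : ℝ × ℝ → ℝ) (hf : Continuous f) (K : Set (ℝ × ℝ)) (hK : IsCompact K)
    (h0 : ∀ p, p ∉ K → f p = 0) : Integrable f volume :=
  hf.integrable_of_hasCompactSupport (HasCompactSupport.intro hK h0)

def box (c : ℝ) : Set (ℝ × ℝ) := Icc (-c) c ×ˢ Icc (-c) c

lemma box_compact (c : ℝ) : IsCompact (box c) := isCompact_Icc.prod isCompact_Icc

lemma mem_box {c : ℝ} {p : ℝ × ℝ} : p ∈ box c ↔ |p.1| ≤ c ∧ |p.2| ≤ c := by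
  simp only [box, mem_prod, mem_Icc, abs_le]

lemma not_box_add {p h : ℝ × ℝ} (hp : p ∉ box 2) (h1 : |h.1| ≤ 1) (h2 : |h.2| ≤ 1) :
    p + h ∉ box 1 := by
  intro hc
  apply hp
  rw [mem_box] at *
  simp only [Prod.fst_add, Prod.snd_add, abs_le] at *
  refine ⟨⟨?_, ?_⟩, ⟨?_, ?_⟩⟩ <;> linarith [hc.1.1, hc.1.2, hc.2.1, hc.2.2]

lemma not_box_sub {p h : ℝ × ℝ} (hp : p ∉ box 2) (h1 : |h.1| ≤ 1) (h2 : |h.2| ≤ 1) :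
    p - h ∉ box 1 := by
  rw [sub_eq_add_neg]
  exact not_box_add hp (by simpa using h1) (by simpa using h2)

lemma not_box_self {p : ℝ × ℝ} (hp : p ∉ box 2) : p ∉ box 1 := by
  have := not_box_add (h := 0) hp (by simp) (by simp)
  simpa using this

lemma step1 (W F : ℝ × ℝ → ℝ) (hW : Continuous W) (hF : Continuous F) (r : ℝ) (hr : 0 < r)
    (hr1 : r ≤ 1)
    (sub : ∀ p : ℝ × ℝ, |p.2| ≤ 1 / 2 →
      2 * π * W p ≤ ∫ t in (0:ℝ)..(2 * π), W (p + hv r t))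
    (F0 : ∀ p, 0 ≤ F p) (Fbox : ∀ p, p ∉ box 1 → F p = 0) (Fs : ∀ p, ¬ |p.2| ≤ 1 / 2 → F p = 0) :
    0 ≤ ∫ t in (0:ℝ)..(2 * π), ∫ p, W p * (F (p + hv r t) + F (p - hv r t) - 2 * F p) := by
  have key : ∀ t, ∫ p, W p * (F (p + hv r t) + F (p - hv r t) - 2 * F p) =
      ∫ p, F p * (W (p + hv r t) + W (p - hv r t) - 2 * W p) := by
    intro t
    have a1 := hv_fst hr.le t
    have a2 := hv_snd hr.le t
    have i1 : Integrable (fun p => W p * F (p + hv r t)) :=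
      integ1 _ (by fun_prop) (box 2) (box_compact 2) (fun p hp => by
        simp only [Fbox _ (not_box_add hp (a1.trans hr1) (a2.trans hr1)), mul_zero])
    have i2 : Integrable (fun p => W p * F (p - hv r t)) :=
      integ1 _ (by fun_prop) (box 2) (box_compact 2) (fun p hp => by
        simp only [Fbox _ (not_box_sub hp (a1.trans hr1) (a2.trans hr1)), mul_zero])
    have i3 : Integrable (fun p => F p * W (p + hv r t)) :=
      integ1 _ (by fun_prop) (box 1) (box_compact 1) (fun p hp => by
        simp only [Fbox _ hp, zero_mul])
    have i4 : Integrable (fun p => F p * W (p - hv r t)) :=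
      integ1 _ (by fun_prop) (box 1) (box_compact 1) (fun p hp => by
        simp only [Fbox _ hp, zero_mul])
    have i5 : Integrable (fun p => 2 * F p * W p) :=
      integ1 _ (by fun_prop) (box 1) (box_compact 1) (fun p hp => by
        simp only [Fbox _ hp, zero_mul, mul_zero])
    have e1 : ∫ p, W p * F (p + hv r t) = ∫ p, F p * W (p - hv r t) := by
      rw [← integral_add_right_eq_self (fun p => F p * W (p - hv r t)) (hv r t)]
      congr 1; ext p; rw [add_sub_cancel_right, mul_comm]
    have e2 : ∫ p, W p * F (p - hv r t) = ∫ p, F p * W (p + hv r t) := by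
      rw [← integral_sub_right_eq_self (fun p => F p * W (p + hv r t)) (hv r t)]
      congr 1; ext p; rw [sub_add_cancel, mul_comm]
    have l : ∀ p, W p * (F (p + hv r t) + F (p - hv r t) - 2 * F p) =
      (W p * F (p + hv r t) + W p * F (p - hv r t)) - 2 * F p * W p := by intro p; ring
    have l' : ∀ p, F p * (W (p + hv r t) + W (p - hv r t) - 2 * W p) =
      (F p * W (p + hv r t) + F p * W (p - hv r t)) - 2 * F p * W p := by intro p; ring
    simp_rw [l, l']
    have i12 : Integrable (fun p => W p * F (p + hv r t) + W p * F (p - hv r t)) := i1.add i2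
    have i34 : Integrable (fun p => F p * W (p + hv r t) + F p * W (p - hv r t)) := i3.add i4
    rw [integral_sub i12 i5, integral_sub i34 i5, integral_add i1 i2,
      integral_add i3 i4, e1, e2, add_comm]
  simp_rw [key]
  rw [swap (fun q => F q.2 * (W (q.2 + hv r q.1) + W (q.2 - hv r q.1) - 2 * W q.2)) (by fun_prop)
    (box 1) (box_compact 1) (fun t p hp => by simp only [Fbox _ hp, zero_mul])]
  apply integral_nonneg
  intro p
  simp only [Pi.zero_apply]
  rw [intervalIntegral.integral_const_mul]
  by_cases hp : |p.2| ≤ 1 / 2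
  · apply mul_nonneg (F0 p)
    have c1 : IntervalIntegrable (fun t => W (p + hv r t)) volume 0 (2 * π) :=
      Continuous.intervalIntegrable (by fun_prop) _ _
    have c2 : IntervalIntegrable (fun t => W (p - hv r t)) volume 0 (2 * π) :=
      Continuous.intervalIntegrable (by fun_prop) _ _
    have c12 : IntervalIntegrable (fun t => W (p + hv r t) + W (p - hv r t)) volume 0 (2 * π) :=
      c1.add c2
    rw [intervalIntegral.integral_sub c12 intervalIntegrable_const,
      intervalIntegral.integral_add c1 c2, shift, intervalIntegral.integral_const, smul_eq_mul]
    have := sub p hp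
    linarith
  · rw [Fs p hp, zero_mul]

lemma exp_int {a : ℝ} (ha : 0 < a) : Integrable (fun y : ℝ => exp (-(a * |y|))) := by
  have h1 : IntegrableOn (fun y : ℝ => exp (-(a * y))) (Ioi 0) := by
    have := exp_neg_integrableOn_Ioi 0 ha
    simpa [neg_mul] using this
  have h2 : IntegrableOn (fun y : ℝ => exp (-(a * |y|))) (Ioi 0) :=
    h1.congr_fun (fun y hy => by simp only [abs_of_pos (mem_Ioi.1 hy)]) measurableSet_Ioi
  have h3 : IntegrableOn (fun y : ℝ => exp (-(a * |y|))) (Iio 0) := by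
    have := h2.comp_neg
    simpa using this
  rw [← integrableOn_univ, ← Iio_union_Ici (a := (0:ℝ))]
  exact h3.union ((integrableOn_Ici_iff_integrableOn_Ioi (by simp)).2 h2)

lemma exp_integral {a : ℝ} (ha : 0 < a) : ∫ y : ℝ, exp (-(a * |y|)) = 2 / a := by
  rw [integral_comp_abs (f := fun y => exp (-(a * y)))]
  have := integral_exp_mul_Ioi (a := -a) (by linarith) 0
  simp only [neg_mul] at this
  rw [this]; simp; field_simp

noncomputable def Q (c1 c2 a : ℝ) (p : ℝ × ℝ) : ℝ :=
  (Icc (-2:ℝ) 2).indicator (fun _ => 1) p.1 *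
    (c1 * (Icc (-2:ℝ) 2).indicator (fun _ => 1) p.2 + c2 * exp (-(a * |p.2|)))

lemma ind_int : Integrable ((Icc (-2:ℝ) 2).indicator (fun _ => (1:ℝ))) :=
  (integrable_indicator_iff measurableSet_Icc).2 (integrableOn_const (by simp))

lemma ind_integral : ∫ x, (Icc (-2:ℝ) 2).indicator (fun _ => (1:ℝ)) x = 4 := by
  rw [integral_indicator measurableSet_Icc]; simp; norm_num

lemma Q_int (c1 c2 : ℝ) {a : ℝ} (ha : 0 < a) : Integrable (Q c1 c2 a) := by
  unfold Q
  exact Integrable.mul_prod (f := (Icc (-2:ℝ) 2).indicator (fun _ => (1:ℝ)))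
    (g := fun y => c1 * (Icc (-2:ℝ) 2).indicator (fun _ => 1) y + c2 * exp (-(a * |y|)))
    ind_int ((ind_int.const_mul c1).add ((exp_int ha).const_mul c2))

lemma Q_integral (c1 c2 : ℝ) {a : ℝ} (ha : 0 < a) : ∫ p, Q c1 c2 a p = 4 * (4 * c1 + 2 * c2 / a) := by
  unfold Q
  rw [Measure.volume_eq_prod, integral_prod_mul (f := (Icc (-2:ℝ) 2).indicator (fun _ => (1:ℝ)))
    (g := fun y => c1 * (Icc (-2:ℝ) 2).indicator (fun _ => 1) y + c2 * exp (-(a * |y|))),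
    integral_add (ind_int.const_mul c1) ((exp_int ha).const_mul c2), integral_const_mul,
    integral_const_mul, ind_integral, exp_integral ha]
  ring

/-- the remainder estimate -/
lemma rem_bound {L : ℝ} (hL : 1 ≤ L) (hpsi : ∀ r : ℝ, 0 ≤ r → ∀ p h : ℝ × ℝ, |h.1| ≤ r → |h.2| ≤ r →
    |psi (p + h) - psi p| ≤ L * r ∧ |psi (p + h) + psi (p - h) - 2 * psi p| ≤ L * r ^ 2)
    {a r : ℝ} (θ : ℝ) (ha : 0 < a) (hr : 0 ≤ r) (hr1 : r ≤ 1) (har : a * r ≤ 1) (p h : ℝ × ℝ)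
    (h1 : |h.1| ≤ r) (h2 : |h.2| ≤ r) :
    |(psi (p + h) * (1 + E a θ (p + h)) + psi (p - h) * (1 + E a θ (p - h))
      - 2 * (psi p * (1 + E a θ p))) - psi p * (E a θ (p + h) + E a θ (p - h) - 2 * E a θ p)|
      ≤ Q (2 * L * r ^ 2) (10 * L * a * r ^ 2) a p := by
  by_cases hp : p ∈ box 2
  · have hq : Q (2 * L * r ^ 2) (10 * L * a * r ^ 2) a p =
      2 * L * r ^ 2 + 10 * L * a * r ^ 2 * exp (-(a * |p.2|)) := by
      have := hp
      simp only [box, mem_prod] at this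
      simp [Q, indicator_of_mem this.1, indicator_of_mem this.2]
    rw [hq]
    have e : (psi (p + h) * (1 + E a θ (p + h)) + psi (p - h) * (1 + E a θ (p - h))
      - 2 * (psi p * (1 + E a θ p))) - psi p * (E a θ (p + h) + E a θ (p - h) - 2 * E a θ p)
      = (1 + E a θ p) * (psi (p + h) + psi (p - h) - 2 * psi p)
        + (psi (p + h) - psi p) * (E a θ (p + h) - E a θ p)
        + (psi (p - h) - psi p) * (E a θ (p - h) - E a θ p) := by ring
    rw [e]
    have m : ∀ {a b A B : ℝ}, |a| ≤ A → |b| ≤ B → |a * b| ≤ A * B := by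
      intro a b A B h1 h2
      rw [abs_mul]; exact mul_le_mul h1 h2 (abs_nonneg _) ((abs_nonneg _).trans h1)
    have h1' : |(-h).1| ≤ r := by simpa using h1
    have h2' : |(-h).2| ≤ r := by simpa using h2
    have P := hpsi r hr p h h1 h2
    have P' := (hpsi r hr p (-h) h1' h2').1
    have El := E_lip θ ha har p h h1 h2
    have El' := E_lip θ ha har p (-h) h1' h2'
    rw [← sub_eq_add_neg] at P' El'
    have E1 : |1 + E a θ p| ≤ 2 := by
      have := abs_le.1 (E_abs_one θ ha p)
      rw [abs_le]; constructor <;> linarith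
    have t1 := m E1 P.2
    have t2 := m P.1 El
    have t3 := m P' El'
    refine (abs_add_three _ _ _).trans ((add_le_add_three t1 t2 t3).trans (le_of_eq ?_))
    ring
  · have z0 : ∀ q : ℝ × ℝ, q ∉ box 1 → psi q = 0 := by
      intro q hq
      apply psi_eq_zero
      intro hc
      apply hq
      refine ⟨hc.1, ?_, ?_⟩ <;> linarith [hc.2.1, hc.2.2]
    rw [z0 _ (not_box_add hp (h1.trans hr1) (h2.trans hr1)),
      z0 _ (not_box_sub hp (h1.trans hr1) (h2.trans hr1)), z0 _ (not_box_self hp)]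
    simp only [zero_mul, mul_zero, add_zero, sub_zero, abs_zero]
    unfold Q
    have i0 : ∀ x, 0 ≤ (Icc (-2:ℝ) 2).indicator (fun _ => (1:ℝ)) x :=
      fun x => indicator_nonneg (fun _ _ => zero_le_one) x
    have := i0 p.1
    have := i0 p.2
    positivity

lemma psi_box (q : ℝ × ℝ) (hq : q ∉ box 1) : psi q = 0 := by
  apply psi_eq_zero
  intro hc
  apply hq
  refine ⟨hc.1, ?_, ?_⟩ <;> linarith [hc.2.1, hc.2.2]

/-- circle means of the kernel -/
noncomputable def G (a r y : ℝ) : ℝ :=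
  ∫ t in (0:ℝ)..(2 * π), (cos (a * (r * cos t)) * exp (-(a * |y + r * sin t|)) - exp (-(a * |y|)))

lemma G_cont (a r : ℝ) : Continuous (G a r) := by
  unfold G
  apply intervalIntegral.continuous_parametric_intervalIntegral_of_continuous'
  fun_prop

lemma mean_id (c : ℝ) : ∫ t in (0:ℝ)..(2 * π), exp (c * sin t) * cos (c * cos t) = 2 * π := by
  have h := DiffContOnCl.circleAverage (f := fun z : ℂ => Complex.exp (-Complex.I * c * z)) (R := 1)
    (c := 0) (Differentiable.diffContOnCl (by fun_prop))
  rw [Real.circleAverage_def] at h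
  simp only [mul_zero, Complex.exp_zero] at h
  have h2 : ∫ t in (0:ℝ)..(2 * π), Complex.exp (-Complex.I * c * circleMap 0 1 t) = (2 * π : ℝ) := by
    have h3 := congrArg (fun z => (2 * π : ℝ) • z) h
    simp only [smul_smul] at h3
    rw [mul_inv_cancel₀ two_pi_pos.ne', one_smul] at h3
    rw [h3]; simp
  have h4 := congrArg Complex.re h2
  rw [Complex.ofReal_re] at h4
  rw [← Complex.reCLM_apply, ← ContinuousLinearMap.intervalIntegral_comp_comm] at h4
  · rw [← h4]
    congr 1; ext t
    rw [Complex.reCLM_apply, Complex.exp_re]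
    simp [circleMap, Complex.exp_re, Complex.exp_im]
  · apply Continuous.intervalIntegrable
    fun_prop

lemma G_zero {a r y : ℝ} (hr : 0 ≤ r) (hy : r ≤ |y|) : G a r y = 0 := by
  unfold G
  have hs : ∀ t, |r * sin t| ≤ r := fun t => by
    rw [abs_mul, abs_of_nonneg hr]; exact mul_le_of_le_one_right hr (abs_sin_le_one _)
  rcases le_total 0 y with h0 | h0
  · rw [abs_of_nonneg h0] at *
    have e : ∀ t, cos (a * (r * cos t)) * exp (-(a * |y + r * sin t|)) - exp (-(a * y)) =
      exp (-(a * y)) * (exp (-(a * r) * sin t) * cos (-(a * r) * cos t) - 1) := by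
      intro t
      have := abs_le.1 (hs t)
      have e1 : exp (-(a * (y + r * sin t))) = exp (-(a * y)) * exp (-(a * r) * sin t) := by
        rw [← exp_add]; ring_nf
      have e2 : cos (a * (r * cos t)) = cos (-(a * r) * cos t) := by
        rw [neg_mul, cos_neg, mul_assoc]
      rw [abs_of_nonneg (by linarith), e1, e2]
      ring
    simp_rw [e]
    rw [intervalIntegral.integral_const_mul, intervalIntegral.integral_sub, mean_id]
    · simp
    · apply Continuous.intervalIntegrable; fun_prop
    · apply Continuous.intervalIntegrable; fun_prop
  · rw [abs_of_nonpos h0] at *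
    have e : ∀ t, cos (a * (r * cos t)) * exp (-(a * |y + r * sin t|)) - exp (-(a * -y)) =
      exp (a * y) * (exp ((a * r) * sin t) * cos ((a * r) * cos t) - 1) := by
      intro t
      have := abs_le.1 (hs t)
      have e1 : exp (-(a * -(y + r * sin t))) = exp (a * y) * exp ((a * r) * sin t) := by
        rw [← exp_add]; ring_nf
      have e2 : exp (-(a * -y)) = exp (a * y) := by ring_nf
      rw [abs_of_nonpos (by linarith), e1, e2, mul_assoc a r]
      ring
    simp_rw [e]
    rw [intervalIntegral.integral_const_mul, intervalIntegral.integral_sub, mean_id]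
    · simp
    · apply Continuous.intervalIntegrable; fun_prop
    · apply Continuous.intervalIntegrable; fun_prop

lemma G_integrand_bound {a r : ℝ} (ha : 0 < a) (hr : 0 ≤ r) (har : a * r ≤ 1) (y t : ℝ) :
    |cos (a * (r * cos t)) * exp (-(a * |y + r * sin t|)) - exp (-(a * |y|))| ≤
      5 * (a * r) * exp (-(a * |y|)) := by
  have := E_lip 0 ha har (0, y) (hv r t) (hv_fst hr t) (hv_snd hr t)
  simpa [E, hv] using this

lemma G_bound {a r : ℝ} (ha : 0 < a) (hr : 0 ≤ r) (har : a * r ≤ 1) (y : ℝ) :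
    |G a r y| ≤ 10 * π * (a * r) := by
  have := intervalIntegral.norm_integral_le_of_norm_le_const (a := 0) (b := 2 * π)
    (f := fun t => cos (a * (r * cos t)) * exp (-(a * |y + r * sin t|)) - exp (-(a * |y|)))
    (C := 5 * (a * r)) (fun t _ => by
      rw [Real.norm_eq_abs]
      refine (G_integrand_bound ha hr har y t).trans ?_
      refine mul_le_of_le_one_right (by positivity) ?_
      rw [exp_le_one_iff]
      have : 0 ≤ a * |y| := by positivity
      linarith)
  rw [Real.norm_eq_abs, sub_zero, abs_of_pos two_pi_pos] at this
  unfold G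
  linarith

lemma G_integral {a r : ℝ} (ha : 0 < a) (hr : 0 ≤ r) (har : a * r ≤ 1) :
    ∫ y, G a r y ≤ - (4 / π * a * r ^ 2) := by
  have hi : Integrable (Function.uncurry fun (t y : ℝ) =>
      cos (a * (r * cos t)) * exp (-(a * |y + r * sin t|)) - exp (-(a * |y|)))
      ((volume.restrict (Ioc 0 (2 * π))).prod volume) := by
    refine Integrable.mono' (((exp_int ha).const_mul (5 * (a * r))).comp_snd _)
      (Continuous.aestronglyMeasurable (by fun_prop)) (Filter.Eventually.of_forall ?_)
    rintro ⟨t, y⟩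
    exact G_integrand_bound ha hr har y t
  have e : ∫ y, G a r y = ∫ t in (0:ℝ)..(2 * π), (2 / a) * (cos (a * r * cos t) - 1) := by
    unfold G
    simp_rw [intervalIntegral.integral_of_le two_pi_pos.le]
    rw [← integral_integral_swap hi]
    congr 1; ext t
    rw [integral_sub, integral_const_mul, exp_integral ha,
      integral_add_right_eq_self (fun y => exp (-(a * |y|))), exp_integral ha, mul_assoc]
    · ring
    · exact ((exp_int ha).comp_add_right (r * sin t)).const_mul _
    · exact exp_int ha
  rw [e]
  have h1 : ∫ t in (0:ℝ)..(2 * π), (2 / a) * (cos (a * r * cos t) - 1) ≤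
      ∫ t in (0:ℝ)..(2 * π), (- (4 / π ^ 2 * a * r ^ 2)) * cos t ^ 2 := by
    apply intervalIntegral.integral_mono_on two_pi_pos.le
    · apply Continuous.intervalIntegrable; fun_prop
    · apply Continuous.intervalIntegrable; fun_prop
    · intro t _
      have hb : |a * r * cos t| ≤ π := by
        rw [abs_mul, abs_of_nonneg (by positivity : 0 ≤ a * r)]
        have := abs_cos_le_one t
        have := abs_nonneg (cos t)
        have := pi_gt_three
        nlinarith [mul_nonneg ha.le hr]
      have := Real.cos_le_one_sub_mul_cos_sq hb
      calc (2 / a) * (cos (a * r * cos t) - 1) ≤ (2 / a) * (- (2 / π ^ 2 * (a * r * cos t) ^ 2)) := by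
            gcongr; linarith
        _ = _ := by field_simp; ring
  refine h1.trans (le_of_eq ?_)
  rw [intervalIntegral.integral_const_mul, integral_cos_sq]
  simp
  field_simp

lemma odd_part (a r : ℝ) (p : ℝ × ℝ) :
    ∫ t in (0:ℝ)..(2 * π), sin (a * (r * cos t)) * exp (-(a * |p.2 + r * sin t|)) = 0 := by
  set f : ℝ → ℝ := fun t => sin (a * (r * cos t)) * exp (-(a * |p.2 + r * sin t|)) with hf
  have hp : Function.Periodic f (2 * π) := by
    intro t; simp [hf]
  have h1 : ∀ t, f (π - t) = - f t := by
    intro t; simp [hf, cos_pi_sub, sin_pi_sub]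
  have h2 := intervalIntegral.integral_comp_sub_left f π (a := 0) (b := 2 * π)
  simp_rw [h1] at h2
  rw [intervalIntegral.integral_neg] at h2
  have h3 := hp.intervalIntegral_add_eq (π - 2 * π) 0
  rw [sub_add_cancel, zero_add] at h3
  rw [sub_zero, h3] at h2
  linarith

lemma circle_E (a θ r : ℝ) (p : ℝ × ℝ) :
    ∫ t in (0:ℝ)..(2 * π), (E a θ (p + hv r t) + E a θ (p - hv r t) - 2 * E a θ p) =
      2 * cos (a * p.1 + θ) * G a r p.2 := by
  have c1 : IntervalIntegrable (fun t => E a θ (p + hv r t)) volume 0 (2 * π) :=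
    Continuous.intervalIntegrable (by fun_prop) _ _
  have c2 : IntervalIntegrable (fun t => E a θ (p - hv r t)) volume 0 (2 * π) :=
    Continuous.intervalIntegrable (by fun_prop) _ _
  have c12 : IntervalIntegrable (fun t => E a θ (p + hv r t) + E a θ (p - hv r t))
    volume 0 (2 * π) := c1.add c2
  rw [intervalIntegral.integral_sub c12 intervalIntegrable_const,
    intervalIntegral.integral_add c1 c2, shift, intervalIntegral.integral_const]
  have d1 : IntervalIntegrable (fun t => cos (a * (r * cos t)) * exp (-(a * |p.2 + r * sin t|)))
    volume 0 (2 * π) := Continuous.intervalIntegrable (by fun_prop) _ _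
  have d2 : IntervalIntegrable (fun t => sin (a * (r * cos t)) * exp (-(a * |p.2 + r * sin t|)))
    volume 0 (2 * π) := Continuous.intervalIntegrable (by fun_prop) _ _
  have e : ∀ t, E a θ (p + hv r t) =
    cos (a * p.1 + θ) * (cos (a * (r * cos t)) * exp (-(a * |p.2 + r * sin t|))) -
    sin (a * p.1 + θ) * (sin (a * (r * cos t)) * exp (-(a * |p.2 + r * sin t|))) := by
    intro t
    have : a * (p.1 + r * cos t) + θ = (a * p.1 + θ) + a * (r * cos t) := by ring
    simp only [E, hv, Prod.fst_add, Prod.snd_add]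
    rw [this, cos_add]; ring
  simp_rw [e]
  rw [intervalIntegral.integral_sub (d1.const_mul _) (d2.const_mul _),
    intervalIntegral.integral_const_mul, intervalIntegral.integral_const_mul, odd_part a]
  unfold G
  rw [intervalIntegral.integral_sub d1 intervalIntegrable_const, intervalIntegral.integral_const]
  simp only [E, smul_eq_mul]
  ring

lemma fixed_r {L : ℝ} (hL : 1 ≤ L) (hpsi : ∀ r : ℝ, 0 ≤ r → ∀ p h : ℝ × ℝ, |h.1| ≤ r → |h.2| ≤ r →
    |psi (p + h) - psi p| ≤ L * r ∧ |psi (p + h) + psi (p - h) - 2 * psi p| ≤ L * r ^ 2)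
    (W : ℝ × ℝ → ℝ) (hW : Continuous W) (B : ℝ) (hB : ∀ p, |W p| ≤ B)
    {a r : ℝ} (θ : ℝ) (ha : 0 < a) (hr : 0 < r) (hr1 : r ≤ 1) (har : a * r ≤ 1)
    (sub : ∀ p : ℝ × ℝ, |p.2| ≤ 1 / 2 →
      2 * π * W p ≤ ∫ t in (0:ℝ)..(2 * π), W (p + hv r t)) :
    0 ≤ (∫ p : ℝ × ℝ, (W p * psi p) * (2 * cos (a * p.1 + θ) * G a r p.2))
      + 2 * π * (B * (112 * L * r ^ 2)) := by
  have hB0 : 0 ≤ B := (abs_nonneg _).trans (hB 0)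
  have s1 := step1 W (fun p => psi p * (1 + E a θ p)) hW (by fun_prop) r hr hr1 sub
    (fun p => mul_nonneg (psi_nonneg p) (by linarith [(abs_le.1 (E_abs_one θ ha p)).1]))
    (fun p hp => by simp only [psi_box p hp, zero_mul])
    (fun p hp => by
      rw [psi_eq_zero, zero_mul]
      intro hc; apply hp; rw [abs_le]; constructor <;> linarith [hc.2.1, hc.2.2])
  have hf1 : ∀ t (p : ℝ × ℝ), p ∉ box 2 → W p * (psi (p + hv r t) * (1 + E a θ (p + hv r t))
      + psi (p - hv r t) * (1 + E a θ (p - hv r t)) - 2 * (psi p * (1 + E a θ p))) = 0 := by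
    intro t p hp
    have a1 := (hv_fst hr.le t).trans hr1
    have a2 := (hv_snd hr.le t).trans hr1
    rw [psi_box _ (not_box_add hp a1 a2), psi_box _ (not_box_sub hp a1 a2),
      psi_box _ (not_box_self hp)]
    ring
  have hf2 : ∀ t (p : ℝ × ℝ), p ∉ box 2 → (W p * psi p) * (E a θ (p + hv r t)
      + E a θ (p - hv r t) - 2 * E a θ p) = 0 := by
    intro t p hp
    rw [psi_box _ (not_box_self hp)]
    ring
  have sw := swap (fun q => (W q.2 * psi q.2) * (E a θ (q.2 + hv r q.1)
      + E a θ (q.2 - hv r q.1) - 2 * E a θ q.2)) (by fun_prop) (box 2) (box_compact 2) hf2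
  simp only [intervalIntegral.integral_const_mul, circle_E] at sw
  rw [← sw]
  have ii1 := interv (fun q => W q.2 * (psi (q.2 + hv r q.1) * (1 + E a θ (q.2 + hv r q.1))
      + psi (q.2 - hv r q.1) * (1 + E a θ (q.2 - hv r q.1)) - 2 * (psi q.2 * (1 + E a θ q.2))))
      (by fun_prop) (box 2) (box_compact 2) hf1
  have ii2 := interv (fun q => (W q.2 * psi q.2) * (E a θ (q.2 + hv r q.1)
      + E a θ (q.2 - hv r q.1) - 2 * E a θ q.2)) (by fun_prop) (box 2) (box_compact 2) hf2
  have pt : ∀ t, ∫ p, W p * (psi (p + hv r t) * (1 + E a θ (p + hv r t))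
      + psi (p - hv r t) * (1 + E a θ (p - hv r t)) - 2 * (psi p * (1 + E a θ p)))
      ≤ (∫ p, (W p * psi p) * (E a θ (p + hv r t) + E a θ (p - hv r t) - 2 * E a θ p))
        + B * (112 * L * r ^ 2) := by
    intro t
    have j2 : Integrable (fun p => (W p * psi p) * (E a θ (p + hv r t) + E a θ (p - hv r t)
      - 2 * E a θ p)) := integ1 _ (by fun_prop) (box 2) (box_compact 2) (hf2 t)
    have j1 : Integrable (fun p => W p * (psi (p + hv r t) * (1 + E a θ (p + hv r t))
      + psi (p - hv r t) * (1 + E a θ (p - hv r t)) - 2 * (psi p * (1 + E a θ p)))) :=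
      integ1 _ (by fun_prop) (box 2) (box_compact 2) (hf1 t)
    have j3 := (Q_int (2 * L * r ^ 2) (10 * L * a * r ^ 2) ha).const_mul B
    have q : B * (112 * L * r ^ 2) = ∫ p, B * Q (2 * L * r ^ 2) (10 * L * a * r ^ 2) a p := by
      rw [integral_const_mul, Q_integral _ _ ha]; field_simp; ring
    rw [q, ← integral_add j2 j3]
    apply integral_mono j1 (j2.add j3)
    intro p
    have rb := rem_bound hL hpsi θ ha hr.le hr1 har p (hv r t) (hv_fst hr.le t) (hv_snd hr.le t)
    set X := psi (p + hv r t) * (1 + E a θ (p + hv r t))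
      + psi (p - hv r t) * (1 + E a θ (p - hv r t)) - 2 * (psi p * (1 + E a θ p))
    set Y := E a θ (p + hv r t) + E a θ (p - hv r t) - 2 * E a θ p
    have : W p * (X - psi p * Y) ≤ B * Q (2 * L * r ^ 2) (10 * L * a * r ^ 2) a p := by
      refine (le_abs_self _).trans ?_
      rw [abs_mul]
      exact mul_le_mul (hB p) rb (abs_nonneg _) hB0
    show W p * X ≤ W p * psi p * Y + B * Q (2 * L * r ^ 2) (10 * L * a * r ^ 2) a p
    linarith
  refine s1.trans ?_
  have := intervalIntegral.integral_mono two_pi_pos.le ii1 (ii2.add intervalIntegrable_const) pt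
  refine this.trans (le_of_eq ?_)
  rw [intervalIntegral.integral_add ii2 intervalIntegrable_const, intervalIntegral.integral_const]
  simp

lemma main_est : ∃ C : ℝ, 0 < C ∧ ∀ (W : ℝ × ℝ → ℝ), Continuous W → ∀ B : ℝ, (∀ p, |W p| ≤ B) →
    (∀ r : ℝ, 0 < r → r ≤ 1 / 4 → ∀ p : ℝ × ℝ, |p.2| ≤ 1 / 2 →
      2 * π * W p ≤ ∫ t in (0:ℝ)..(2 * π), W (p + hv r t)) →
    ∀ a θ : ℝ, 0 < a → ∫ x in (-1:ℝ)..1, W (x, 0) * chi x * cos (a * x + θ) ≤ C * B / a := by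
  obtain ⟨L, hL, hpsi⟩ := psi_bounds
  refine ⟨28 * π ^ 2 * L, by positivity, ?_⟩
  intro W hW B hB sub a θ ha
  have hB0 : 0 ≤ B := (abs_nonneg _).trans (hB 0)
  set m0 : ℝ → ℝ := fun y => ∫ x in (-1:ℝ)..1, W (x, y) * chi x * cos (a * x + θ) with hm0
  have m0c : Continuous m0 := by
    apply intervalIntegral.continuous_parametric_intervalIntegral_of_continuous'
    fun_prop
  set m : ℝ → ℝ := fun y => chi (2 * y) * m0 y with hm
  have mc : Continuous m := by fun_prop
  have mz : m 0 = m0 0 := by simp [hm, chi_zero]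
  change m0 0 ≤ _
  rw [← mz]
  rcases le_or_gt (m 0) 0 with hneg | hpos
  · exact hneg.trans (by positivity)
  apply le_of_forall_pos_le_add
  intro ε' hε'
  set ε := ε' / (5 * π ^ 2) with hε
  have εpos : 0 < ε := by positivity
  obtain ⟨δ, δpos, hδ⟩ := Metric.continuous_iff.1 mc 0 ε εpos
  set r := min (min (1 / 4) (1 / a)) (δ / 2) with hrdef
  have hr : 0 < r := by positivity
  have hr4 : r ≤ 1 / 4 := (min_le_left _ _).trans (min_le_left _ _)
  have hra : r ≤ 1 / a := (min_le_left _ _).trans (min_le_right _ _)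
  have hrd : r ≤ δ / 2 := min_le_right _ _
  have har : a * r ≤ 1 := by
    calc a * r ≤ a * (1 / a) := by gcongr
      _ = 1 := by field_simp
  have fr := fixed_r hL hpsi W hW B hB θ ha hr (by linarith) har (sub r hr hr4)
  have Gc := G_cont a r
  have Gz : ∀ y, y ∉ Icc (-r) r → G a r y = 0 := by
    intro y hy
    apply G_zero hr.le
    by_contra hc
    push Not at hc
    exact hy ⟨(abs_lt.1 hc).1.le, (abs_lt.1 hc).2.le⟩
  have Gs : HasCompactSupport (G a r) := HasCompactSupport.intro isCompact_Icc Gz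
  have Gi : Integrable (G a r) := Gc.integrable_of_hasCompactSupport Gs
  have mGi : Integrable (fun y => m y * G a r y) :=
    (mc.mul Gc).integrable_of_hasCompactSupport Gs.mul_left
  have fub : (∫ p : ℝ × ℝ, (W p * psi p) * (2 * cos (a * p.1 + θ) * G a r p.2)) =
      2 * ∫ y, m y * G a r y := by
    have hi : Integrable (fun p : ℝ × ℝ => (W p * psi p) * (2 * cos (a * p.1 + θ) * G a r p.2)) :=
      integ1 _ (by fun_prop) (box 1) (box_compact 1) (fun p hp => by
        simp only [psi_box p hp, zero_mul, mul_zero])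
    rw [Measure.volume_eq_prod] at hi ⊢
    rw [integral_prod_symm _ hi, ← integral_const_mul]
    congr 1; ext y
    simp only [hm, hm0, psi]
    rw [intervalIntegral.integral_of_le (by norm_num), ← integral_Icc_eq_integral_Ioc,
      setIntegral_eq_integral_of_forall_compl_eq_zero]
    · have e : ∀ x, W (x, y) * (chi x * chi (2 * y)) * (2 * cos (a * x + θ) * G a r y) =
        (2 * (chi (2 * y) * G a r y)) * (W (x, y) * chi x * cos (a * x + θ)) := by
        intro x; ring
      simp_rw [e]
      rw [integral_const_mul]; ring
    · intro x hx
      rw [chi_eq_zero]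
      · ring
      · by_contra hc
        push Not at hc
        exact hx ⟨(abs_lt.1 hc).1.le, (abs_lt.1 hc).2.le⟩
  rw [fub] at fr
  have dif : ∫ y, m y * G a r y ≤ m 0 * (∫ y, G a r y) + 20 * π * ε * a * r ^ 2 := by
    have e : (∫ y, m y * G a r y) - m 0 * (∫ y, G a r y) = ∫ y in Icc (-r) r, (m y - m 0) * G a r y := by
      rw [setIntegral_eq_integral_of_forall_compl_eq_zero, ← integral_const_mul,
        ← integral_sub mGi (Gi.const_mul _)]
      · congr 1; ext y; ring
      · intro y hy; rw [Gz y hy, mul_zero]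
    have b : ‖∫ y in Icc (-r) r, (m y - m 0) * G a r y‖ ≤
        (ε * (10 * π * (a * r))) * volume.real (Icc (-r) r) := by
      apply norm_setIntegral_le_of_norm_le_const (by simp)
      intro y hy
      rw [norm_mul]
      have h1 := (hδ y (by
        rw [Real.dist_eq, sub_zero]
        exact (abs_le.2 ⟨hy.1, hy.2⟩).trans_lt (by linarith))).le
      rw [Real.dist_eq] at h1
      exact mul_le_mul h1 (G_bound ha hr.le har y) (norm_nonneg _) εpos.le
    rw [← e, Real.volume_real_Icc_of_le (by linarith)] at b
    have := (le_abs_self _).trans b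
    linarith
  have gi := G_integral ha hr.le har
  have h1 : m 0 * (∫ y, G a r y) ≤ m 0 * (-(4 / π * a * r ^ 2)) :=
    mul_le_mul_of_nonneg_left gi hpos.le
  have h2 : (m 0 * (4 / π * a)) * r ^ 2 ≤ (20 * π * ε * a + 112 * π * L * B) * r ^ 2 := by
    linarith
  have h3 := le_of_mul_le_mul_right h2 (by positivity)
  have h4 : m 0 = (m 0 * (4 / π * a)) * (π / (4 * a)) := by field_simp
  rw [h4]
  refine (mul_le_mul_of_nonneg_right h3 (by positivity)).trans (le_of_eq ?_)
  rw [hε]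
  field_simp
  ring

lemma fold_chi (u : ℝ → ℝ) (hu : Continuous u) (hp : Function.Periodic u 1) :
    ∫ x in (-1:ℝ)..1, u x * chi x = ∫ x in (0:ℝ)..1, u x := by
  have i : ∀ a b : ℝ, IntervalIntegrable (fun x => u x * chi x) volume a b :=
    fun a b => Continuous.intervalIntegrable (by fun_prop) _ _
  rw [← intervalIntegral.integral_add_adjacent_intervals (i (-1) 0) (i 0 1)]
  have e1 : ∫ x in (-1:ℝ)..0, u x * chi x = ∫ x in (0:ℝ)..1, u x * Real.smoothTransition x := by
    have := intervalIntegral.integral_comp_add_right (a := -1) (b := 0)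
      (fun x => u x * Real.smoothTransition x) 1
    norm_num at this
    rw [← this]
    apply intervalIntegral.integral_congr
    intro x hx
    rw [uIcc_of_le (by norm_num)] at hx
    simp only [chi_neg hx.2, hp x]
  have e2 : ∫ x in (0:ℝ)..1, u x * chi x = ∫ x in (0:ℝ)..1, u x * (1 - Real.smoothTransition x) := by
    apply intervalIntegral.integral_congr
    intro x hx
    rw [uIcc_of_le (by norm_num)] at hx
    simp only [chi_pos hx.1]
  have hs : Continuous Real.smoothTransition := Real.smoothTransition.continuous
  rw [e1, e2, ← intervalIntegral.integral_add]
  · congr 1; ext x; ring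
  · apply Continuous.intervalIntegrable; fun_prop
  · apply Continuous.intervalIntegrable; fun_prop

noncomputable def cl (y : ℝ) : ℝ := max (-(3/4)) (min (3/4) y)

@[fun_prop] lemma cl_cont : Continuous cl := by unfold cl; fun_prop

lemma cl_abs (y : ℝ) : |cl y| ≤ 3 / 4 := by
  unfold cl
  rw [abs_le]
  exact ⟨le_max_left _ _, max_le (by norm_num) (min_le_left _ _)⟩

lemma cl_eq {y : ℝ} (h : |y| ≤ 3 / 4) : cl y = y := by
  rw [abs_le] at h
  unfold cl
  rw [min_eq_right h.2, max_eq_right h.1]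

lemma cos_bound : ∃ C : ℝ, 0 < C ∧
      ∀ B : ℝ, 1 ≤ B →
      ∀ u : ℝ → ℝ, Function.Periodic u 1 →
      ∀ utilde : ℂ → ℝ,
        (∀ x : ℝ, utilde (x : ℂ) = u x) →
        Subharmonic {z : ℂ | |z.im| < 1} utilde →
        (∀ z : ℂ, |z.im| < 1 → |utilde z| ≤ B) → Continuous u ∧
        ∀ (n : ℕ) (θ : ℝ), 0 < n → ∫ x in (0:ℝ)..1, u x * cos (2 * π * n * x + θ) ≤ C * B / n := by
  obtain ⟨C, hC, H⟩ := main_est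
  refine ⟨C, hC, ?_⟩
  intro B hB u hper w hwu hsub hwB
  set ι : ℝ × ℝ → ℂ := fun p => (p.1 : ℂ) + (cl p.2 : ℝ) * Complex.I with hι
  have ιc : Continuous ι := by fun_prop
  have ιim : ∀ p, (ι p).im = cl p.2 := by intro p; simp [hι]
  have ιm : ∀ p, ι p ∈ {z : ℂ | |z.im| < 1} := by
    intro p
    show |(ι p).im| < 1
    rw [ιim]; linarith [cl_abs p.2]
  set W : ℝ × ℝ → ℝ := fun p => w (ι p) with hW
  have Wc : Continuous W := hsub.1.comp_continuous ιc ιm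
  have W0 : ∀ x, W (x, 0) = u x := by
    intro x
    simp only [hW, hι]
    rw [cl_eq (by norm_num)]
    simp [hwu]
  have uc : Continuous u := by
    have : u = fun x => W (x, 0) := by ext x; rw [W0]
    rw [this]; fun_prop
  refine ⟨uc, ?_⟩
  intro n θ hn
  have hn' : (0:ℝ) < n := by exact_mod_cast hn
  have key := H W Wc B (fun p => hwB _ (ιm p)) ?_ (2 * π * n) θ (by positivity)
  · have e : ∀ x, W (x, 0) * chi x * cos (2 * π * n * x + θ) =
        (u x * cos (2 * π * n * x + θ)) * chi x := by
      intro x; rw [W0]; ring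
    simp_rw [e] at key
    rw [fold_chi (fun x => u x * cos (2 * π * n * x + θ)) (by fun_prop)] at key
    · refine key.trans ?_
      have : (1:ℝ) ≤ 2 * π := by linarith [pi_gt_three]
      gcongr
      nlinarith
    · intro x
      simp only [hper x]
      congr 1
      rw [← cos_add_nat_mul_two_pi (2 * π * n * x + θ) n]
      congr 1; ring
  · intro r hr hr4 p hp
    have hp' : cl p.2 = p.2 := cl_eq (by linarith)
    have := hsub.2 (ι p) r hr ?_
    · have e : ∀ t : ℝ, w (ι p + r * Complex.exp (t * Complex.I)) = W (p + hv r t) := by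
        intro t
        have h2 := hv_snd hr.le t
        have : cl (p + hv r t).2 = (p + hv r t).2 := by
          apply cl_eq
          rw [Prod.snd_add]
          exact (abs_add_le _ _).trans (by linarith)
        simp only [hW, hι]
        rw [this, hp']
        congr 1
        rw [Complex.exp_mul_I]
        simp only [hv, Prod.fst_add, Prod.snd_add]
        push_cast
        ring
      simp_rw [e] at this
      calc 2 * π * W p ≤ 2 * π * ((2 * π)⁻¹ * ∫ t in (0:ℝ)..(2 * π), W (p + hv r t)) := by
            gcongr
        _ = _ := by rw [← mul_assoc, mul_inv_cancel₀ two_pi_pos.ne', one_mul]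
    · intro z hz
      show |z.im| < 1
      rw [Metric.mem_closedBall, Complex.dist_eq] at hz
      have h1 := (Complex.abs_im_le_norm (z - ι p)).trans hz
      rw [Complex.sub_im, ιim, hp'] at h1
      rw [abs_le] at h1 hp
      rw [abs_lt]; constructor <;> linarith

end FCB

/-- Fourier coefficients of a bounded 1-periodic function with a bounded subharmonic
extension to the strip `|Im z| < 1` decay like `B/|k|`. -/
theorem fourier_coeff_bound_of_subharmonic_extension :
    ∃ C : ℝ, 0 < C ∧
      ∀ B : ℝ, 1 ≤ B →
      ∀ u : ℝ → ℝ, Function.Periodic u 1 → (∀ x : ℝ, |u x| ≤ 1) →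
      ∀ utilde : ℂ → ℝ,
        (∀ x : ℝ, utilde (x : ℂ) = u x) →
        Subharmonic {z : ℂ | |z.im| < 1} utilde →
        (∀ z : ℂ, |z.im| < 1 → |utilde z| ≤ B) →
        ∀ k : ℤ, k ≠ 0 →
          ‖∫ x in (0:ℝ)..1, (u x : ℂ) *
              Complex.exp (-2 * Real.pi * Complex.I * (k : ℂ) * (x : ℂ))‖
            ≤ C * B / (|k| : ℝ) := by
  obtain ⟨C, hC, H⟩ := FCB.cos_bound
  refine ⟨C, hC, ?_⟩
  intro B hB u hper _ w hwu hsub hwB k hk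
  obtain ⟨uc, H⟩ := H B hB u hper w hwu hsub hwB
  set v : ℂ := ∫ x in (0:ℝ)..1, (u x : ℂ) *
              Complex.exp (-2 * Real.pi * Complex.I * (k : ℂ) * (x : ℂ)) with hv
  set φ : ℝ := v.arg
  have h1 : Complex.exp (-(φ * Complex.I)) * v = (‖v‖ : ℂ) := by
    conv_lhs => rw [← Complex.norm_mul_exp_arg_mul_I v]
    rw [mul_left_comm, ← Complex.exp_add]
    simp [φ]
  have h2 : ‖v‖ = ∫ x in (0:ℝ)..1, u x * Real.cos (2 * Real.pi * k * x + φ) := by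
    rw [hv, ← intervalIntegral.integral_const_mul, ← hv] at h1
    have h3 := congrArg Complex.re h1
    rw [Complex.ofReal_re, ← Complex.reCLM_apply,
      ← ContinuousLinearMap.intervalIntegral_comp_comm] at h3
    · rw [← h3]
      congr 1; ext x
      rw [Complex.reCLM_apply, mul_left_comm, ← Complex.exp_add, Complex.re_ofReal_mul]
      have : -(φ * Complex.I) + -2 * Real.pi * Complex.I * (k : ℂ) * (x : ℂ) =
        ((-(2 * Real.pi * k * x + φ) : ℝ) : ℂ) * Complex.I := by push_cast; ring
      rw [this, Complex.exp_ofReal_mul_I_re, Real.cos_neg]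
    · apply Continuous.intervalIntegrable
      fun_prop
  rw [h2]
  obtain ⟨n, rfl | rfl⟩ := Int.eq_nat_or_neg k
  · have := H n φ (by omega)
    simpa using this
  · have := H n (-φ) (by omega)
    have e : ∀ x : ℝ, Real.cos (2 * Real.pi * ((-(n : ℤ) : ℤ) : ℝ) * x + φ) =
        Real.cos (2 * Real.pi * n * x + -φ) := by
      intro x
      rw [← Real.cos_neg]
      congr 1; push_cast; ring
    simp_rw [e]
    simpa using this
end

section
/- Let c > 0, A ≥ 1, B ≥ 1 and let ω ∈ ℝ satisfy DC(c,A). Let u : ℝ → ℝ be 1-periodic with |u(x)| ≤ 1 for all x, admitting a subharmonic extension ũ to the strip {z ∈ ℂ : |Im z| < 1} with |ũ(z)| ≤ B. Then there exist σ = σ(A) > 0 (one may take σ = 1/(50A)), c̃ > 0, and M₀ (depending on c, A, B) such that for every integer M ≥ M₀, the Lebesgue measure of the set {x ∈ [0,1] : |∑_{0 ≤ |m| < M} ((M−|m|)/M²)·u(x+mω) − û(0)| > M^{−σ}} is less than e^{−c̃·M^σ}, where û(0) = ∫₀¹ u. -/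
open MeasureTheory

/-- Distance from a real number to the nearest integer. -/
noncomputable def distToInt (θ : ℝ) : ℝ := |θ - round θ|

/-- The Diophantine condition `‖kω‖ > c·|k|^{-A}` for all nonzero integers `k`. -/
def IsDC (c A ω : ℝ) : Prop :=
  ∀ k : ℤ, k ≠ 0 → c * (|k| : ℝ) ^ (-A) < distToInt (k * ω)

def SMean (U : Set ℂ) (w : ℂ → ℝ) : Prop :=
  ∀ z : ℂ, ∀ r : ℝ, 0 < r → Metric.closedBall z r ⊆ U → w z ≤ Real.circleAverage w z r

lemma circleInt_of_contOn {w : ℂ → ℝ} {U : Set ℂ} (hw : ContinuousOn w U) {z : ℂ} {r : ℝ} (hr : 0 < r)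
    (h : Metric.closedBall z r ⊆ U) : CircleIntegrable w z r := by
  apply ContinuousOn.circleIntegrable hr.le
  exact hw.mono (Metric.sphere_subset_closedBall.trans h)

lemma max_principle {K : Set ℂ} (hK : IsCompact K) {w : ℂ → ℝ} (hw : ContinuousOn w K) {m : ℝ}
    (h : ∀ z ∈ K, m < w z → ∃ r > 0, Metric.closedBall z r ⊆ K ∧ w z ≤ Real.circleAverage w z r) :
    ∀ z ∈ K, w z ≤ m := by
  intro z0 hz0
  by_contra hcon
  push Not at hcon
  obtain ⟨z1, hz1, hmax⟩ := hK.exists_isMaxOn ⟨z0, hz0⟩ hw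
  have hm1 : m < w z1 := lt_of_lt_of_le hcon (hmax hz0)
  have hK2 : IsCompact (K ∩ w ⁻¹' {w z1}) := by
    apply hK.of_isClosed_subset _ Set.inter_subset_left
    exact hw.preimage_isClosed_of_isClosed hK.isClosed isClosed_singleton
  obtain ⟨z2, hz2, hmax2⟩ := hK2.exists_isMaxOn ⟨z1, hz1, rfl⟩ Complex.continuous_re.continuousOn
  have hw2 : w z2 = w z1 := hz2.2
  obtain ⟨r, hr, hrK, hle⟩ := h z2 hz2.1 (by rw [hw2]; exact hm1)
  have hmem : ∀ θ : ℝ, circleMap z2 r θ ∈ K := fun θ =>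
    hrK (circleMap_mem_closedBall z2 hr.le θ)
  have hlt : ∫ θ in (0:ℝ)..(2 * Real.pi), w (circleMap z2 r θ) < ∫ θ in (0:ℝ)..(2 * Real.pi), w z1 := by
    apply intervalIntegral.integral_lt_integral_of_continuousOn_of_le_of_exists_lt (by positivity)
    · exact hw.comp (continuous_circleMap z2 r).continuousOn (fun θ _ => hmem θ)
    · exact continuousOn_const
    · exact fun θ _ => hmax (hmem θ)
    · refine ⟨0, ⟨le_rfl, by positivity⟩, ?_⟩
      apply lt_of_le_of_ne (hmax (hmem 0))
      intro heq
      have := hmax2 (show circleMap z2 r 0 ∈ K ∩ w ⁻¹' {w z1} from ⟨hmem 0, heq⟩)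
      simp [circleMap] at this
      linarith
  rw [Real.circleAverage_def, hw2] at hle
  simp only [intervalIntegral.integral_const, smul_eq_mul, sub_zero] at hlt hle
  have hp : (0:ℝ) < 2 * Real.pi := by positivity
  have := mul_lt_mul_of_pos_left hlt (inv_pos.mpr hp)
  rw [← mul_assoc, inv_mul_cancel₀ hp.ne', one_mul] at this
  linarith

lemma barrier_mean (C x0 a D : ℝ) (z : ℂ) (r : ℝ) :
    Real.circleAverage (fun z : ℂ => C * ((z.re - x0) ^ 2 - (z.im - a) ^ 2 + D)) z r
      = C * ((z.re - x0) ^ 2 - (z.im - a) ^ 2 + D) := by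
  have : (fun z : ℂ => C * ((z.re - x0) ^ 2 - (z.im - a) ^ 2 + D)) =
      fun z : ℂ => (((C : ℂ) * ((z - (x0 + a * Complex.I)) ^ 2 + D)) : ℂ).re := by
    ext z
    simp [pow_two]
  rw [this]
  rw [InnerProductSpace.HarmonicOnNhd.circleAverage_eq]
  · rw [← congrFun this z]
  · intro y _
    apply AnalyticAt.harmonicAt_re
    fun_prop

lemma strip_max {a b m Bd : ℝ} {w : ℂ → ℝ}
    (hw : ContinuousOn w {z | a ≤ z.im ∧ z.im ≤ b}) (hsm : SMean {z | a < z.im ∧ z.im < b} w)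
    (hB : ∀ z : ℂ, a ≤ z.im → z.im ≤ b → w z ≤ Bd)
    (ha : ∀ z : ℂ, z.im = a → w z ≤ m) (hb : ∀ z : ℂ, z.im = b → w z ≤ m) :
    ∀ z : ℂ, a ≤ z.im → z.im ≤ b → w z ≤ m := by
  intro z0 h0a h0b
  by_contra hcon
  push Not at hcon
  set D := (b - a) ^ 2 with hD
  have hD0 : 0 ≤ D := by positivity
  set K := max (Bd - m) 0 + 1 with hK
  have hK0 : 0 < K := by positivity
  have hK1 : Bd - m < K := by have := le_max_left (Bd - m) 0; linarith
  obtain ⟨R, hR0, hR⟩ : ∃ R : ℝ, 0 < R ∧ K / R ^ 2 * D < w z0 - m := by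
    have ht : Filter.Tendsto (fun R : ℝ => K / R ^ 2 * D) Filter.atTop (nhds (0 * D)) :=
      (Filter.Tendsto.div_atTop tendsto_const_nhds (Filter.tendsto_pow_atTop (by norm_num))).mul_const D
    rw [zero_mul] at ht
    have h1 := ht.eventually (gt_mem_nhds (show 0 < w z0 - m by linarith))
    obtain ⟨R, h2, h3⟩ := (h1.and (Filter.eventually_gt_atTop 0)).exists
    exact ⟨R, h3, h2⟩
  set C := K / R ^ 2 with hC
  have hC0 : 0 < C := by positivity
  set S : Set ℂ := {z | |z.re - z0.re| ≤ R ∧ a ≤ z.im ∧ z.im ≤ b} with hS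
  have hc1 : Continuous (fun z : ℂ => |z.re - z0.re|) := by fun_prop
  have hScl : IsClosed S := by
    exact (isClosed_le hc1 continuous_const).inter ((isClosed_le continuous_const Complex.continuous_im).inter
      (isClosed_le Complex.continuous_im continuous_const))
  have hSc : IsCompact S := by
    apply (isCompact_Icc.reProdIm (isCompact_Icc) : IsCompact ((Set.Icc (z0.re - R) (z0.re + R)) ×ℂ (Set.Icc a b))).of_isClosed_subset hScl
    rintro z ⟨h1, h2, h3⟩
    rw [abs_le] at h1
    exact ⟨⟨by linarith, by linarith⟩, h2, h3⟩
  set β : ℂ → ℝ := fun z => C * ((z.re - z0.re) ^ 2 - (z.im - a) ^ 2 + D) with hβ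
  have hβc : Continuous β := by fun_prop
  have key := max_principle hSc (w := fun z => w z - β z) (m := m)
    ((hw.mono (fun z hz => hz.2)).sub hβc.continuousOn) ?_ z0 ⟨by simpa using hR0.le, h0a, h0b⟩
  · simp only [hβ, sub_self] at key
    have : C * (0 ^ 2 - (z0.im - a) ^ 2 + D) ≤ C * D := by
      apply mul_le_mul_of_nonneg_left _ hC0.le
      nlinarith [sq_nonneg (z0.im - a)]
    linarith
  · rintro z ⟨h1, h2, h3⟩ hz
    have hbar : (z.im - a) ^ 2 ≤ D := by
      apply pow_le_pow_left₀ <;> linarith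
    have hb0 : 0 ≤ β z := by
      apply mul_nonneg hC0.le
      nlinarith [sq_nonneg (z.re - z0.re)]
    have n1 : z.im ≠ a := fun h => by have := ha z h; linarith
    have n2 : z.im ≠ b := fun h => by have := hb z h; linarith
    have n3 : |z.re - z0.re| ≠ R := fun h => by
      have h4 := hB z h2 h3
      have : K ≤ β z := by
        have h5 : C * R ^ 2 = K := by rw [hC]; field_simp
        rw [← h5]
        apply mul_le_mul_of_nonneg_left _ hC0.le
        rw [← h, sq_abs]; linarith
      linarith
    have hopen : IsOpen {z : ℂ | |z.re - z0.re| < R ∧ a < z.im ∧ z.im < b} := by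
      exact (isOpen_lt hc1 continuous_const).inter ((isOpen_lt continuous_const Complex.continuous_im).inter
        (isOpen_lt Complex.continuous_im continuous_const))
    obtain ⟨r, hr, hr2⟩ := Metric.nhds_basis_closedBall.mem_iff.mp
      (hopen.mem_nhds ⟨lt_of_le_of_ne h1 n3, lt_of_le_of_ne h2 n1.symm, lt_of_le_of_ne h3 n2⟩)
    refine ⟨r, hr, fun y hy => ?_, ?_⟩
    · obtain ⟨q1, q2, q3⟩ := hr2 hy
      exact ⟨q1.le, q2.le, q3.le⟩
    · rw [Real.circleAverage_fun_sub, barrier_mean]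
      · have := hsm z r hr (fun y hy => (hr2 hy).2)
        simp only [hβ]
        linarith
      · exact circleInt_of_contOn hw hr (fun y hy => ⟨(hr2 hy).2.1.le, (hr2 hy).2.2.le⟩)
      · exact circleInt_of_contOn hβc.continuousOn hr (Set.subset_univ _)

noncomputable def PI (u : ℝ → ℝ) (z : ℂ) : ℝ :=
  Real.pi⁻¹ * ∫ t : ℝ, u (z.re + z.im * t) * (1 + t ^ 2)⁻¹

lemma PI_integrable {u : ℝ → ℝ} (hu : Continuous u) (hb : ∀ x, |u x| ≤ 1) (x y : ℝ) :
    Integrable (fun t : ℝ => u (x + y * t) * (1 + t ^ 2)⁻¹) := by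
  apply integrable_inv_one_add_sq.bdd_mul (c := 1)
  · exact (hu.comp (by fun_prop)).aestronglyMeasurable
  · exact Filter.Eventually.of_forall (fun t => hb _)

lemma PI_cont {u : ℝ → ℝ} (hu : Continuous u) (hb : ∀ x, |u x| ≤ 1) : Continuous (PI u) := by
  apply Continuous.mul continuous_const
  apply continuous_of_dominated (bound := fun t : ℝ => (1 + t ^ 2)⁻¹)
  · exact fun z => (PI_integrable hu hb _ _).aestronglyMeasurable
  · intro z
    refine Filter.Eventually.of_forall (fun t => ?_)
    have h0 : 0 ≤ (1 + t ^ 2)⁻¹ := by positivity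
    rw [norm_mul, Real.norm_eq_abs, Real.norm_of_nonneg h0]
    exact mul_le_of_le_one_left h0 (hb _)
  · exact integrable_inv_one_add_sq
  · refine Filter.Eventually.of_forall (fun t => ?_)
    exact (hu.comp (by fun_prop)).mul continuous_const

lemma PI_abs {u : ℝ → ℝ} (hb : ∀ x, |u x| ≤ 1) (z : ℂ) : |PI u z| ≤ 1 := by
  unfold PI
  rw [abs_mul, abs_of_pos (inv_pos.mpr Real.pi_pos)]
  have : |∫ t : ℝ, u (z.re + z.im * t) * (1 + t ^ 2)⁻¹| ≤ ∫ t : ℝ, (1 + t ^ 2)⁻¹ := by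
    rw [← Real.norm_eq_abs]
    apply norm_integral_le_of_norm_le integrable_inv_one_add_sq
    refine Filter.Eventually.of_forall (fun t => ?_)
    have h0 : 0 ≤ (1 + t ^ 2)⁻¹ := by positivity
    rw [norm_mul, Real.norm_eq_abs, Real.norm_of_nonneg h0]
    exact mul_le_of_le_one_left h0 (hb _)
  rw [integral_univ_inv_one_add_sq] at this
  rw [inv_mul_le_iff₀ Real.pi_pos]
  linarith

lemma PI_real (u : ℝ → ℝ) (z : ℂ) (hz : z.im = 0) : PI u z = u z.re := by
  unfold PI
  simp only [hz, zero_mul, add_zero]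
  rw [integral_const_mul, integral_univ_inv_one_add_sq]
  field_simp

lemma PI_conj (u : ℝ → ℝ) (x y : ℝ) : PI u ⟨x, -y⟩ = PI u ⟨x, y⟩ := by
  unfold PI
  congr 1
  rw [← integral_neg_eq_self]
  simp

lemma PI_negfun (u : ℝ → ℝ) (z : ℂ) : PI (fun x => u (-x)) z = PI u (-z) := by
  unfold PI
  congr 1
  apply integral_congr_ae
  refine Filter.Eventually.of_forall (fun t => ?_)
  simp only [Complex.neg_re, Complex.neg_im]
  congr 2
  ring

lemma PI_periodic {u : ℝ → ℝ} (hp : Function.Periodic u 1) (y : ℝ) :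
    Function.Periodic (fun x : ℝ => PI u ⟨x, y⟩) 1 := by
  intro x
  unfold PI
  refine congrArg (fun s => Real.pi⁻¹ * s) ?_
  apply integral_congr_ae
  refine Filter.Eventually.of_forall (fun t => ?_)
  simp only
  rw [← hp (x + y * t)]
  congr 2
  ring

lemma PI_kernel (u : ℝ → ℝ) (z : ℂ) (hz : 0 < z.im) :
    PI u z = Real.pi⁻¹ * ∫ t : ℝ, u t * (z.im / ((z.re - t) ^ 2 + z.im ^ 2)) := by
  unfold PI
  congr 1
  set g : ℝ → ℝ := fun t => u t * (z.im / ((z.re - t) ^ 2 + z.im ^ 2)) with hg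
  have h1 : ∫ t : ℝ, g (z.re + z.im * t) = z.im⁻¹ * ∫ t, g t := by
    rw [Measure.integral_comp_mul_left (fun t => g (z.re + t)) z.im, integral_add_left_eq_self (fun t => g t),
      abs_of_pos (inv_pos.mpr hz), smul_eq_mul]
  have h2 : ∫ t, g t = ∫ t : ℝ, z.im * g (z.re + z.im * t) := by
    rw [integral_const_mul, h1]; field_simp
  rw [h2]
  apply integral_congr_ae
  refine Filter.Eventually.of_forall (fun t => ?_)
  simp only [hg]
  have : (z.re - (z.re + z.im * t)) ^ 2 + z.im ^ 2 = z.im ^ 2 * (1 + t ^ 2) := by ring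
  rw [this]
  have : 1 + t ^ 2 ≠ 0 := by positivity
  field_simp

lemma PI_kernel_integrable {u : ℝ → ℝ} (hu : Continuous u) (hb : ∀ x, |u x| ≤ 1) (x y : ℝ) (hy : 0 < y) :
    Integrable (fun t : ℝ => u t * (y / ((x - t) ^ 2 + y ^ 2))) := by
  have h1 := (PI_integrable hu hb x y)
  set g : ℝ → ℝ := fun t => u t * (y / ((x - t) ^ 2 + y ^ 2)) with hg
  have h2 : (fun t : ℝ => u (x + y * t) * (1 + t ^ 2)⁻¹) = fun t => y * g (x + y * t) := by
    ext t
    simp only [hg]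
    have : (x - (x + y * t)) ^ 2 + y ^ 2 = y ^ 2 * (1 + t ^ 2) := by ring
    rw [this]
    have : 1 + t ^ 2 ≠ 0 := by positivity
    field_simp
  rw [h2] at h1
  have h3 : Integrable (fun t => g (x + y * t)) := by
    have := h1.const_mul y⁻¹
    refine this.congr (Filter.Eventually.of_forall fun t => ?_)
    simp only
    field_simp
  have h4 := (integrable_comp_mul_left_iff (fun t => g (x + t)) hy.ne').mp h3
  have h5 := h4.comp_add_left (-x)
  simpa using h5

lemma kernel_mean (t : ℝ) (z : ℂ) (r : ℝ) (hr : 0 < r) (h : Metric.closedBall z r ⊆ {z | 0 < z.im}) :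
    Real.circleAverage (fun z : ℂ => z.im / ((z.re - t) ^ 2 + z.im ^ 2)) z r
      = z.im / ((z.re - t) ^ 2 + z.im ^ 2) := by
  have : (fun z : ℂ => z.im / ((z.re - t) ^ 2 + z.im ^ 2)) =
      fun z : ℂ => (Complex.I / (z - t)).re := by
    ext z
    simp [Complex.div_re, Complex.normSq_apply, pow_two]
  rw [this]
  rw [InnerProductSpace.HarmonicOnNhd.circleAverage_eq]
  · rw [← congrFun this z]
  · intro y hy
    rw [abs_of_pos hr] at hy
    apply AnalyticAt.harmonicAt_re
    apply AnalyticAt.div analyticAt_const (by fun_prop)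
    intro h0
    have h1 := h hy
    have h2 := congrArg Complex.im h0
    simp at h2
    simp [h2] at h1

lemma PI_prod_integrable {u : ℝ → ℝ} (hu : Continuous u) (hb : ∀ x, |u x| ≤ 1) (z : ℂ) (r : ℝ)
    (him : ∀ θ, 0 < (circleMap z r θ).im) :
    Integrable (Function.uncurry (fun θ t : ℝ => u t *
      ((circleMap z r θ).im / (((circleMap z r θ).re - t) ^ 2 + (circleMap z r θ).im ^ 2))))
      ((volume.restrict (Set.uIoc 0 (2 * Real.pi))).prod volume) := by
  have hmeas : Measurable (Function.uncurry (fun θ t : ℝ => u t *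
      ((circleMap z r θ).im / (((circleMap z r θ).re - t) ^ 2 + (circleMap z r θ).im ^ 2)))) := by
    have := hu.measurable
    have h2 := (continuous_circleMap z r)
    have h3 : Measurable (fun p : ℝ × ℝ => circleMap z r p.1) := (h2.comp continuous_fst).measurable
    have h4 : Measurable (fun p : ℝ × ℝ => (circleMap z r p.1).re) := Complex.measurable_re.comp h3
    have h5 : Measurable (fun p : ℝ × ℝ => (circleMap z r p.1).im) := Complex.measurable_im.comp h3
    unfold Function.uncurry
    exact (this.comp measurable_snd).mul (h5.div (((h4.sub measurable_snd).pow_const 2).add (h5.pow_const 2)))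
  refine (integrable_prod_iff hmeas.aestronglyMeasurable).mpr ⟨?_, ?_⟩
  · refine Filter.Eventually.of_forall (fun θ => ?_)
    have := PI_kernel_integrable hu hb (circleMap z r θ).re (circleMap z r θ).im (him θ)
    simpa only [Function.uncurry_apply_pair] using this
  · have hb' : ∀ x, |(fun x => |u x|) x| ≤ 1 := by simpa using hb
    have hc := PI_cont (u := fun x => |u x|) hu.abs hb'
    have hc2 : Continuous (fun θ => Real.pi * PI (fun x => |u x|) (circleMap z r θ)) :=
      continuous_const.mul (hc.comp (continuous_circleMap z r))
    have := (hc2.intervalIntegrable (μ := volume) 0 (2 * Real.pi)).def'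
    refine Integrable.congr this (Filter.Eventually.of_forall (fun θ => ?_))
    simp only [Function.uncurry_apply_pair]
    rw [PI_kernel _ _ (him θ)]
    rw [← mul_assoc, mul_inv_cancel₀ Real.pi_ne_zero, one_mul]
    apply integral_congr_ae
    refine Filter.Eventually.of_forall (fun t => ?_)
    simp only [norm_mul, Real.norm_eq_abs]
    congr 1
    rw [abs_of_nonneg]
    have := him θ
    positivity

lemma PI_mean {u : ℝ → ℝ} (hu : Continuous u) (hb : ∀ x, |u x| ≤ 1) (z : ℂ) (r : ℝ) (hr : 0 < r)
    (h : Metric.closedBall z r ⊆ {z | 0 < z.im}) :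
    Real.circleAverage (PI u) z r = PI u z := by
  have him : ∀ θ, 0 < (circleMap z r θ).im := fun θ => h (circleMap_mem_closedBall z hr.le θ)
  have hz : 0 < z.im := h (Metric.mem_closedBall_self hr.le)
  rw [PI_kernel u z hz, Real.circleAverage_def]
  have e1 : ∀ θ, PI u (circleMap z r θ) = Real.pi⁻¹ * ∫ t : ℝ, u t *
      ((circleMap z r θ).im / (((circleMap z r θ).re - t) ^ 2 + (circleMap z r θ).im ^ 2)) :=
    fun θ => PI_kernel u _ (him θ)
  simp only [e1]
  rw [intervalIntegral.integral_const_mul, intervalIntegral_integral_swap]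
  · rw [smul_eq_mul, mul_left_comm]
    congr 1
    rw [← integral_const_mul]
    apply integral_congr_ae
    refine Filter.Eventually.of_forall (fun t => ?_)
    simp only
    rw [intervalIntegral.integral_const_mul, mul_left_comm]
    congr 1
    exact kernel_mean t z r hr h
  · exact PI_prod_integrable hu hb z r him

lemma kernel_diff {a b y : ℝ} (hy : 0 < y) :
    |y / (a ^ 2 + y ^ 2) - y / (b ^ 2 + y ^ 2)| ≤ |a - b| / (2 * y) * (y / (a ^ 2 + y ^ 2) + y / (b ^ 2 + y ^ 2)) := by
  have ha : 0 < a ^ 2 + y ^ 2 := by positivity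
  have hb : 0 < b ^ 2 + y ^ 2 := by positivity
  have e : y / (a ^ 2 + y ^ 2) - y / (b ^ 2 + y ^ 2) = y * (b + a) * (b - a) / ((a ^ 2 + y ^ 2) * (b ^ 2 + y ^ 2)) := by
    field_simp; ring
  have e2 : |a - b| / (2 * y) * (y / (a ^ 2 + y ^ 2) + y / (b ^ 2 + y ^ 2)) =
     |a - b| * ((a ^ 2 + y ^ 2) + (b ^ 2 + y ^ 2)) / 2 / ((a ^ 2 + y ^ 2) * (b ^ 2 + y ^ 2)) := by
    field_simp; ring
  rw [e, e2, abs_div, abs_of_pos (mul_pos ha hb)]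
  apply div_le_div_of_nonneg_right _ (mul_pos ha hb).le
  rw [abs_mul, abs_mul, abs_of_pos hy, abs_sub_comm b a]
  have h1 : y * |b + a| ≤ ((a ^ 2 + y ^ 2) + (b ^ 2 + y ^ 2)) / 2 := by
    have := abs_add_le b a
    nlinarith [sq_nonneg (|a| - y), sq_nonneg (|b| - y), sq_abs a, sq_abs b]
  calc y * |b + a| * |a - b| ≤ ((a ^ 2 + y ^ 2) + (b ^ 2 + y ^ 2)) / 2 * |a - b| :=
        mul_le_mul_of_nonneg_right h1 (abs_nonneg _)
    _ = _ := by ring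

lemma PI_lip {u : ℝ → ℝ} (hu : Continuous u) (hb : ∀ x, |u x| ≤ 1) {y : ℝ} (hy : 0 < y) (x1 x2 : ℝ) :
    |PI u ⟨x1, y⟩ - PI u ⟨x2, y⟩| ≤ 1 / y * |x1 - x2| := by
  have one : ∀ x, PI (fun _ => 1) ⟨x, y⟩ = 1 := by
    intro x; unfold PI; simp [integral_univ_inv_one_add_sq]
  have i1 : ∀ x, Integrable (fun t : ℝ => (y / ((x - t) ^ 2 + y ^ 2))) := fun x => by
    have := PI_kernel_integrable (u := fun _ => 1) continuous_const (by simp) x y hy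
    simpa using this
  have v1 : ∀ x, ∫ t : ℝ, (y / ((x - t) ^ 2 + y ^ 2)) = Real.pi := fun x => by
    have := PI_kernel (fun _ => 1) ⟨x, y⟩ hy
    rw [one] at this
    simp only [one_mul] at this
    have h := Real.pi_pos
    field_simp at this
    exact this.symm
  rw [PI_kernel u _ hy, PI_kernel u _ hy, ← mul_sub, ← integral_sub (PI_kernel_integrable hu hb _ _ hy) (PI_kernel_integrable hu hb _ _ hy)]
  rw [abs_mul, abs_of_pos (inv_pos.mpr Real.pi_pos), inv_mul_le_iff₀ Real.pi_pos]
  have hh : Integrable (fun t => |x1 - x2| / (2 * y) * (y / ((x1 - t) ^ 2 + y ^ 2) + y / ((x2 - t) ^ 2 + y ^ 2))) :=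
    ((i1 x1).add (i1 x2)).const_mul _
  refine (Real.norm_eq_abs _).symm.le.trans ((norm_integral_le_of_norm_le hh ?_).trans ?_)
  · refine Filter.Eventually.of_forall (fun t => ?_)
    simp only
    rw [← mul_sub, norm_mul]
    refine (mul_le_of_le_one_left (norm_nonneg _) (hb t)).trans ?_
    have := kernel_diff (a := x1 - t) (b := x2 - t) hy
    rw [sub_sub_sub_cancel_right] at this
    exact this
  · rw [integral_const_mul, integral_add (i1 x1) (i1 x2), v1, v1]
    apply le_of_eq
    field_simp
    ring

lemma PI_int {u : ℝ → ℝ} (hu : Continuous u) (hb : ∀ x, |u x| ≤ 1) (hp : Function.Periodic u 1) (y : ℝ) :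
    ∫ x in (0:ℝ)..1, PI u ⟨x, y⟩ = ∫ x in (0:ℝ)..1, u x := by
  unfold PI
  rw [intervalIntegral.integral_const_mul, intervalIntegral_integral_swap]
  · have : ∀ t : ℝ, ∫ x in (0:ℝ)..1, u (x + y * t) * (1 + t ^ 2)⁻¹ = (∫ x in (0:ℝ)..1, u x) * (1 + t ^ 2)⁻¹ := by
      intro t
      rw [intervalIntegral.integral_mul_const, intervalIntegral.integral_comp_add_right]
      congr 1
      have := hp.intervalIntegral_add_eq (y * t) 0
      rw [zero_add, add_comm 1]
      simpa using this
    simp only [this]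
    rw [integral_const_mul, integral_univ_inv_one_add_sq]
    field_simp
  · have hfin : IsFiniteMeasure (volume.restrict (Set.uIoc (0:ℝ) 1)) := by
      rw [Set.uIoc_of_le zero_le_one]; infer_instance
    have hi : Integrable (fun p : ℝ × ℝ => (1 + p.2 ^ 2)⁻¹) ((volume.restrict (Set.uIoc (0:ℝ) 1)).prod volume) :=
      integrable_inv_one_add_sq.comp_snd _
    apply hi.bdd_mul (c := 1)
    · exact (hu.comp (by fun_prop)).aestronglyMeasurable
    · exact Filter.Eventually.of_forall (fun t => hb _)

def Stp : Set ℂ := {z : ℂ | |z.im| < 1}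

lemma im_mean (C : ℝ) (z : ℂ) (r : ℝ) :
    Real.circleAverage (fun z : ℂ => C * z.im) z r = C * z.im := by
  have : (fun z : ℂ => C * z.im) = fun z : ℂ => ((C : ℂ) * z).im := by
    ext z
    simp
  rw [this]
  rw [InnerProductSpace.HarmonicOnNhd.circleAverage_eq]
  · rw [← congrFun this z]
  · intro y _
    apply AnalyticAt.harmonicAt_im
    fun_prop

lemma major_up {u : ℝ → ℝ} {w : ℂ → ℝ} {B : ℝ} (hB : 1 ≤ B) (hu : Continuous u) (hb : ∀ x, |u x| ≤ 1)
    (hwu : ∀ x : ℝ, w x = u x) (hc : ContinuousOn w Stp) (hs : SMean Stp w)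
    (hwB : ∀ z ∈ Stp, |w z| ≤ B) :
    ∀ z : ℂ, 0 ≤ z.im → z.im ≤ 1 / 2 → w z ≤ PI u z + 4 * B * z.im := by
  have hcl : {z : ℂ | 0 ≤ z.im ∧ z.im ≤ 1 / 2} ⊆ Stp := by
    rintro z ⟨h1, h2⟩
    show |z.im| < 1
    rw [abs_of_nonneg h1]; linarith
  have hPc := PI_cont hu hb
  have key := strip_max (a := 0) (b := 1 / 2) (m := 0) (Bd := B + 1)
    (w := fun z => w z - PI u z - 4 * B * z.im) ?_ ?_ ?_ ?_ ?_
  · intro z h1 h2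
    have := key z h1 h2
    linarith
  · exact ((hc.mono hcl).sub hPc.continuousOn).sub (by fun_prop)
  · intro z r hr hrs
    have hS : Metric.closedBall z r ⊆ Stp :=
      fun y hy => hcl ⟨(hrs hy).1.le, (hrs hy).2.le⟩
    have i1 := circleInt_of_contOn hc hr hS
    have i2 := circleInt_of_contOn hPc.continuousOn (z := z) hr (Set.subset_univ _)
    have i3 := circleInt_of_contOn (w := fun z : ℂ => 4 * B * z.im) (U := Set.univ) (z := z) (by fun_prop) hr (Set.subset_univ _)
    have i4 : CircleIntegrable (fun z => w z - PI u z) z r := i1.sub i2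
    rw [Real.circleAverage_fun_sub i4 i3, Real.circleAverage_fun_sub i1 i2, im_mean,
      PI_mean hu hb z r hr (fun y hy => (hrs hy).1)]
    have := hs z r hr hS
    linarith
  · intro z h1 h2
    have a1 := (abs_le.mp (hwB z (hcl ⟨h1, h2⟩))).2
    have a2 := (abs_le.mp (PI_abs hb z)).1
    have : 0 ≤ 4 * B * z.im := by positivity
    linarith
  · intro z hz
    have : z = (z.re : ℂ) := by apply Complex.ext <;> simp [hz]
    simp only [PI_real u z hz, hz]
    rw [this, hwu]
    simp
  · intro z hz
    have a1 := (abs_le.mp (hwB z (hcl ⟨by rw [hz]; norm_num, hz.le⟩))).2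
    have a2 := (abs_le.mp (PI_abs hb z)).1
    simp only [hz]
    linarith

lemma smean_neg {w : ℂ → ℝ} (hs : SMean Stp w) : SMean Stp (fun z => w (-z)) := by
  intro z r hr h
  have := hs (-z) r hr (fun y hy => ?_)
  · refine this.trans (le_of_eq ?_)
    rw [Real.circleAverage_eq_integral_add Real.pi, Real.circleAverage_def]
    congr 2
    ext θ
    congr 1
    simp [circleMap, add_mul, Complex.exp_add]
    ring
  · have : -y ∈ Stp := h (by
      rw [Metric.mem_closedBall, dist_eq_norm] at hy ⊢
      have e : -y - z = -(y - -z) := by ring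
      rw [e, norm_neg]; exact hy)
    simpa [Stp] using this

lemma major {u : ℝ → ℝ} {w : ℂ → ℝ} {B : ℝ} (hB : 1 ≤ B) (hu : Continuous u) (hb : ∀ x, |u x| ≤ 1)
    (hwu : ∀ x : ℝ, w x = u x) (hc : ContinuousOn w Stp) (hs : SMean Stp w)
    (hwB : ∀ z ∈ Stp, |w z| ≤ B) :
    ∀ z : ℂ, |z.im| ≤ 1 / 2 → w z ≤ PI u z + 4 * B * |z.im| := by
  intro z hz
  rcases le_total 0 z.im with h | h
  · rw [abs_of_nonneg h] at hz ⊢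
    exact major_up hB hu hb hwu hc hs hwB z h hz
  · rw [abs_of_nonpos h] at hz ⊢
    have := major_up (u := fun x => u (-x)) (w := fun z => w (-z)) hB (hu.comp continuous_neg) (fun x => hb _)
      (fun x => by rw [← hwu]; simp)
      (hc.comp continuous_neg.continuousOn (fun y hy => by simpa [Stp] using hy)) (smean_neg hs)
      (fun y hy => hwB _ (by simpa [Stp] using hy)) (-z) (by simpa using h) (by simpa using hz)
    rw [PI_negfun] at this
    simpa using this

lemma stp_add {z : ℂ} (hz : z ∈ Stp) (t : ℝ) : z + (t : ℂ) ∈ Stp := by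
  simpa [Stp] using hz

lemma wsum_cont {w : ℂ → ℝ} (hc : ContinuousOn w Stp) (s : Finset ℤ) (c τ : ℤ → ℝ) :
    ContinuousOn (fun z => ∑ m ∈ s, c m * w (z + (τ m : ℝ))) Stp := by
  apply continuousOn_finsetSum
  intro m _
  apply continuousOn_const.mul
  exact hc.comp (by fun_prop) (fun z hz => stp_add hz _)

lemma circleAverage_shift (w : ℂ → ℝ) (z c : ℂ) (r : ℝ) :
    Real.circleAverage (fun z => w (z + c)) z r = Real.circleAverage w (z + c) r := by
  rw [Real.circleAverage_def, Real.circleAverage_def]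
  congr 2
  ext θ
  congr 1
  simp only [circleMap]
  ring

lemma wsum_smean {w : ℂ → ℝ} (hc : ContinuousOn w Stp) (hs : SMean Stp w) (s : Finset ℤ) (c τ : ℤ → ℝ)
    (h0 : ∀ m ∈ s, 0 ≤ c m) :
    SMean Stp (fun z => ∑ m ∈ s, c m * w (z + (τ m : ℝ))) := by
  intro z r hr h
  rw [Real.circleAverage_fun_sum]
  · apply Finset.sum_le_sum
    intro m hm
    have e : Real.circleAverage (fun z => c m * w (z + (τ m : ℝ))) z r =
        c m * Real.circleAverage (fun z => w (z + (τ m : ℝ))) z r :=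
      Real.circleAverage_fun_smul (a := c m) (f := fun z => w (z + (τ m : ℝ)))
    rw [e]
    apply mul_le_mul_of_nonneg_left _ (h0 m hm)
    rw [circleAverage_shift]
    apply hs _ _ hr
    intro y hy
    have : y - (τ m : ℝ) ∈ Stp := h (by
      rw [Metric.mem_closedBall, dist_eq_norm] at hy ⊢
      convert hy using 2; ring)
    simpa [Stp] using this
  · intro m _
    apply circleInt_of_contOn (U := Stp) _ hr h
    apply continuousOn_const.mul
    exact hc.comp (by fun_prop) (fun z hz => stp_add hz _)

lemma upper {u : ℝ → ℝ} {w : ℂ → ℝ} {B : ℝ} (hB : 1 ≤ B) (hu : Continuous u) (hb : ∀ x, |u x| ≤ 1)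
    (hper : Function.Periodic u 1)
    (hwu : ∀ x : ℝ, w x = u x) (hc : ContinuousOn w Stp) (hs : SMean Stp w)
    (hwB : ∀ z ∈ Stp, |w z| ≤ B) (s : Finset ℤ) (c τ : ℤ → ℝ) (h0 : ∀ m ∈ s, 0 ≤ c m) (h1 : ∑ m ∈ s, c m = 1)
    {δ : ℝ} (hδ : ∀ (f : ℝ → ℝ) (L : ℝ), Function.Periodic f 1 → (∀ x y, |f x - f y| ≤ L * |x - y|) →
      ∀ x, |∑ m ∈ s, c m * f (x + τ m) - ∫ t in (0:ℝ)..1, f t| ≤ L * δ)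
    {ρ : ℝ} (hρ : 0 < ρ) (hρ2 : ρ ≤ 1 / 2) :
    ∀ z : ℂ, |z.im| ≤ ρ → ∑ m ∈ s, c m * w (z + (τ m : ℝ)) - ∫ t in (0:ℝ)..1, u t ≤ δ / ρ + 4 * B * ρ := by
  set I := ∫ t in (0:ℝ)..1, u t with hI
  have hcl : {z : ℂ | -ρ ≤ z.im ∧ z.im ≤ ρ} ⊆ Stp := by
    rintro z ⟨h1, h2⟩
    show |z.im| < 1
    rw [abs_lt]; constructor <;> linarith
  have hbd : ∀ z : ℂ, |z.im| = ρ → ∑ m ∈ s, c m * w (z + (τ m : ℝ)) - I ≤ δ / ρ + 4 * B * ρ := by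
    intro z hz
    have e1 : ∀ m ∈ s, c m * w (z + (τ m : ℝ)) ≤ c m * PI u ⟨z.re + τ m, ρ⟩ + c m * (4 * B * ρ) := by
      intro m hm
      rw [← mul_add]
      apply mul_le_mul_of_nonneg_left _ (h0 m hm)
      have := major hB hu hb hwu hc hs hwB (z + (τ m : ℝ)) (by simp [hz]; linarith)
      have e2 : PI u (z + (τ m : ℝ)) = PI u ⟨z.re + τ m, ρ⟩ := by
        rcases abs_eq hρ.le |>.mp hz with h | h
        · congr 1; apply Complex.ext <;> simp [h]
        · rw [← PI_conj]; congr 1; apply Complex.ext <;> simp [h]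
      rw [e2] at this
      simpa [hz] using this
    have e3 := Finset.sum_le_sum e1
    rw [Finset.sum_add_distrib, ← Finset.sum_mul, h1, one_mul] at e3
    have e4 := hδ (fun x => PI u ⟨x, ρ⟩) (1 / ρ) (PI_periodic hper ρ) (PI_lip hu hb hρ) z.re
    rw [PI_int hu hb hper] at e4
    have e5 := (abs_le.mp e4).2
    have e6 : 1 / ρ * δ = δ / ρ := by ring
    linarith
  have hwb : ∀ z ∈ Stp, ∑ m ∈ s, c m * w (z + (τ m : ℝ)) ≤ B := by
    intro z hz
    calc _ ≤ ∑ m ∈ s, c m * B := Finset.sum_le_sum (fun m hm =>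
            mul_le_mul_of_nonneg_left (abs_le.mp (hwB _ (stp_add hz _))).2 (h0 m hm))
      _ = B := by rw [← Finset.sum_mul, h1, one_mul]
  have key := strip_max (a := -ρ) (b := ρ) (m := δ / ρ + 4 * B * ρ) (Bd := B - I)
    (w := fun z => ∑ m ∈ s, c m * w (z + (τ m : ℝ)) - I) ?_ ?_ ?_ ?_ ?_
  · intro z hz
    rw [abs_le] at hz
    exact key z hz.1 hz.2
  · exact ((wsum_cont hc s c τ).mono hcl).sub continuousOn_const
  · intro z r hr hrs
    have hS : Metric.closedBall z r ⊆ Stp :=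
      fun y hy => hcl ⟨(hrs hy).1.le, (hrs hy).2.le⟩
    have i1 := circleInt_of_contOn (wsum_cont hc s c τ) hr hS
    rw [Real.circleAverage_fun_sub i1 (circleIntegrable_const _ _ _), Real.circleAverage_const]
    have := wsum_smean hc hs s c τ h0 z r hr hS
    linarith
  · intro z h1 h2
    have := hwb z (hcl ⟨h1, h2⟩)
    linarith
  · intro z hz
    exact hbd z (by rw [hz, abs_neg, abs_of_pos hρ])
  · intro z hz
    exact hbd z (by rw [hz, abs_of_pos hρ])

lemma perm_sum (G : ℤ → ℝ) (q : ℕ) (hq : 0 < q) (p : ℤ) (hpq : IsCoprime p (q : ℤ))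
    (hG : ∀ k, G (k + q) = G k) :
    ∑ j ∈ Finset.range q, G (j * p) = ∑ j ∈ Finset.range q, G j := by
  have hq' : (0 : ℤ) < q := by exact_mod_cast hq
  have hper : Function.Periodic G (q : ℤ) := hG
  have hmod : ∀ k : ℤ, G (k % q) = G k := by
    intro k
    have h := hper.sub_zsmul_eq (x := k) (k / q)
    rw [← h]
    congr 1
    have := Int.emod_add_mul_ediv k q
    rw [smul_eq_mul]
    linarith
  have hnn : ∀ k : ℤ, ((k % q).toNat : ℤ) = k % q := fun k => Int.toNat_of_nonneg (Int.emod_nonneg _ hq'.ne')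
  have hmaps : Set.MapsTo (fun j : ℕ => (((j : ℤ) * p) % q).toNat) (Finset.range q) (Finset.range q) := by
    intro j _
    simp only [Finset.coe_range, Set.mem_Iio]
    have := Int.emod_lt_of_pos ((j : ℤ) * p) hq'
    have := hnn ((j : ℤ) * p)
    omega
  have hinj : Set.InjOn (fun j : ℕ => (((j : ℤ) * p) % q).toNat) (Finset.range q) := by
    intro a ha b hb hab
    simp only [Finset.coe_range, Set.mem_Iio] at ha hb
    have h1 : ((a : ℤ) * p) % q = ((b : ℤ) * p) % q := by
      rw [← hnn, ← hnn ((b : ℤ) * p)]; exact_mod_cast hab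
    have h2 : (q : ℤ) ∣ (b : ℤ) * p - a * p := Int.ModEq.dvd h1
    rw [← sub_mul] at h2
    have h3 := hpq.symm.dvd_of_dvd_mul_right h2
    have h4 : (b : ℤ) - a = 0 := Int.eq_zero_of_abs_lt_dvd h3 (by rw [abs_lt]; constructor <;> omega)
    omega
  refine Finset.sum_nbij (fun j : ℕ => (((j : ℤ) * p) % q).toNat) hmaps hinj
    (Finset.surjOn_of_injOn_of_card_le _ hmaps hinj le_rfl) ?_
  intro j _
  rw [hnn, hmod]

section equi
variable {f : ℝ → ℝ} {L : ℝ}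

lemma lip_cont (hL : ∀ x y, |f x - f y| ≤ L * |x - y|) : Continuous f := by
  have h0 : 0 ≤ L := by
    have := (abs_nonneg _).trans (hL 1 0); simpa using this
  apply LipschitzWith.continuous (K := ⟨L, h0⟩)
  exact LipschitzWith.of_dist_le_mul (fun x y => hL x y)

lemma lip_int (hL : ∀ x y, |f x - f y| ≤ L * |x - y|) (a h : ℝ) (hh : 0 ≤ h) :
    |h * f a - ∫ t in a..(a + h), f t| ≤ L * h * h := by
  have hc := lip_cont hL
  have h0 : 0 ≤ L := by
    have := (abs_nonneg _).trans (hL 1 0); simpa using this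
  have : h * f a - ∫ t in a..(a + h), f t = ∫ t in a..(a + h), (f a - f t) := by
    rw [intervalIntegral.integral_sub (by simp) (hc.intervalIntegrable _ _)]
    simp
  rw [this, ← Real.norm_eq_abs]
  refine (intervalIntegral.norm_integral_le_of_norm_le_const (C := L * h) ?_).trans (by simp [abs_of_nonneg hh])
  intro t ht
  rw [Set.uIoc_of_le (by linarith)] at ht
  refine (hL a t).trans (mul_le_mul_of_nonneg_left ?_ h0)
  rw [abs_le]; constructor <;> linarith [ht.1, ht.2]

lemma block_rat (hf : Function.Periodic f 1) (hL : ∀ x y, |f x - f y| ≤ L * |x - y|) (x : ℝ) (q : ℕ) (hq : 0 < q) :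
    |∑ j ∈ Finset.range q, (f (x + j / q) - ∫ t in (0:ℝ)..1, f t)| ≤ L := by
  have hc := lip_cont hL
  have hq' : (0 : ℝ) < q := by exact_mod_cast hq
  have h1 : ∫ t in (0:ℝ)..1, f t = ∑ j ∈ Finset.range q, ∫ t in (x + (j : ℕ) / q)..(x + ((j + 1 : ℕ) : ℝ) / q), f t := by
    rw [intervalIntegral.sum_integral_adjacent_intervals (a := fun j : ℕ => x + (j : ℝ) / q)
      (fun k _ => hc.intervalIntegrable _ _)]
    have := hf.intervalIntegral_add_eq x 0
    simp only [Nat.cast_zero, zero_div, add_zero, div_self hq'.ne']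
    rw [this, zero_add]
  have h2 : ∑ j ∈ Finset.range q, (f (x + j / q) - ∫ t in (0:ℝ)..1, f t) =
      q * ∑ j ∈ Finset.range q, ((1 / q : ℝ) * f (x + j / q) - ∫ t in (x + (j : ℕ) / q)..(x + (j : ℕ) / q + 1 / q), f t) := by
    rw [Finset.sum_sub_distrib, Finset.sum_const, Finset.card_range, nsmul_eq_mul, Finset.sum_sub_distrib,
      ← Finset.mul_sum, mul_sub, h1]
    congr 1
    · field_simp
    · congr 1
      apply Finset.sum_congr rfl
      intro j _
      congr 1
      push_cast
      ring
  rw [h2, abs_mul, abs_of_pos hq']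
  calc (q : ℝ) * |∑ j ∈ Finset.range q, ((1 / q : ℝ) * f (x + j / q) - ∫ t in (x + (j : ℕ) / q)..(x + (j : ℕ) / q + 1 / q), f t)|
      ≤ q * ∑ j ∈ Finset.range q, (L * (1 / q) * (1 / q)) := by
        apply mul_le_mul_of_nonneg_left _ hq'.le
        refine (Finset.abs_sum_le_sum_abs _ _).trans (Finset.sum_le_sum fun j _ => ?_)
        exact lip_int hL _ _ (by positivity)
    _ = L := by
        rw [Finset.sum_const, Finset.card_range, nsmul_eq_mul]; field_simp

lemma block (hf : Function.Periodic f 1) (hL : ∀ x y, |f x - f y| ≤ L * |x - y|) (x ω : ℝ) (q : ℕ) (hq : 0 < q)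
    (p : ℤ) (hpq : IsCoprime p (q : ℤ)) (happ : |ω - p / q| ≤ 1 / (q * q)) :
    |∑ j ∈ Finset.range q, (f (x + j * ω) - ∫ t in (0:ℝ)..1, f t)| ≤ 2 * L := by
  have h0 : 0 ≤ L := by
    have := (abs_nonneg _).trans (hL 1 0); simpa using this
  have hq' : (0 : ℝ) < q := by exact_mod_cast hq
  have h1 := block_rat hf hL x q hq
  have h2 : ∑ j ∈ Finset.range q, f (x + j / q) = ∑ j ∈ Finset.range q, f (x + j * p / q) := by
    have := perm_sum (fun k : ℤ => f (x + k / q)) q hq p hpq (by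
      intro k
      rw [← hf (x + k / q)]
      congr 1
      push_cast
      field_simp
      ring)
    push_cast at this
    exact this.symm
  have h3 : |∑ j ∈ Finset.range q, (f (x + j * ω) - f (x + j * p / q))| ≤ L := by
    calc _ ≤ ∑ j ∈ Finset.range q, (L * (1 / q)) := by
          refine (Finset.abs_sum_le_sum_abs _ _).trans (Finset.sum_le_sum fun j hj => ?_)
          refine (hL _ _).trans (mul_le_mul_of_nonneg_left ?_ h0)
          have hj' : (j : ℝ) ≤ q := by exact_mod_cast (Finset.mem_range.mp hj).le
          have : x + j * ω - (x + j * p / q) = j * (ω - p / q) := by ring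
          rw [this, abs_mul, abs_of_nonneg (Nat.cast_nonneg j)]
          calc (j : ℝ) * |ω - p / q| ≤ q * (1 / (q * q)) := mul_le_mul hj' happ (abs_nonneg _) hq'.le
            _ = 1 / q := by field_simp
      _ = L := by rw [Finset.sum_const, Finset.card_range, nsmul_eq_mul]; field_simp
  have h4 : ∑ j ∈ Finset.range q, (f (x + j * ω) - ∫ t in (0:ℝ)..1, f t) =
     ∑ j ∈ Finset.range q, (f (x + j * ω) - f (x + j * p / q)) +
       ∑ j ∈ Finset.range q, (f (x + j / q) - ∫ t in (0:ℝ)..1, f t) := by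
    rw [Finset.sum_sub_distrib, Finset.sum_sub_distrib, Finset.sum_sub_distrib, h2]; ring
  rw [h4]
  refine (abs_add_le _ _).trans ?_
  linarith

lemma birk (hf : Function.Periodic f 1) (hL : ∀ x y, |f x - f y| ≤ L * |x - y|) (ω : ℝ) (q : ℕ) (hq : 0 < q)
    (p : ℤ) (hpq : IsCoprime p (q : ℤ)) (happ : |ω - p / q| ≤ 1 / (q * q)) (k s : ℕ) :
    ∀ x, |∑ j ∈ Finset.range (q * k + s), (f (x + j * ω) - ∫ t in (0:ℝ)..1, f t)| ≤ 2 * L * k + L * s := by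
  induction k with
  | zero =>
    intro x
    simp only [mul_zero, zero_add, Nat.cast_zero]
    calc _ ≤ ∑ j ∈ Finset.range s, L := by
          refine (Finset.abs_sum_le_sum_abs _ _).trans (Finset.sum_le_sum fun j hj => ?_)
          have h1 := lip_int hL (x + j * ω) 1 zero_le_one
          rw [hf.intervalIntegral_add_eq (x + j * ω) 0] at h1
          simpa using h1
      _ = _ := by rw [Finset.sum_const, Finset.card_range, nsmul_eq_mul]; ring
  | succ k ih =>
    intro x
    have e : q * (k + 1) + s = q + (q * k + s) := by ring
    rw [e, Finset.sum_range_add]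
    refine (abs_add_le _ _).trans ?_
    have h1 := block hf hL x ω q hq p hpq happ
    have h2 := ih (x + q * ω)
    have h3 : ∑ j ∈ Finset.range (q * k + s), (f (x + ((q + j : ℕ) : ℝ) * ω) - ∫ t in (0:ℝ)..1, f t) =
      ∑ j ∈ Finset.range (q * k + s), (f (x + q * ω + j * ω) - ∫ t in (0:ℝ)..1, f t) := by
      apply Finset.sum_congr rfl
      intro j _
      congr 2
      push_cast; ring
    rw [h3]
    push_cast
    linarith

lemma birk2 (hf : Function.Periodic f 1) (hL : ∀ x y, |f x - f y| ≤ L * |x - y|) (ω : ℝ) (q : ℕ) (hq : 0 < q)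
    (p : ℤ) (hpq : IsCoprime p (q : ℤ)) (happ : |ω - p / q| ≤ 1 / (q * q)) (N : ℕ) (x : ℝ) :
    |∑ j ∈ Finset.range N, (f (x + j * ω) - ∫ t in (0:ℝ)..1, f t)| ≤ 2 * L / q * N + L * q := by
  have h0 : 0 ≤ L := by
    have := (abs_nonneg _).trans (hL 1 0); simpa using this
  have hq' : (0 : ℝ) < q := by exact_mod_cast hq
  have := birk hf hL ω q hq p hpq happ (N / q) (N % q) x
  rw [Nat.div_add_mod] at this
  refine this.trans (add_le_add ?_ ?_)
  · have h1 : ((N / q : ℕ) : ℝ) ≤ N / q := Nat.cast_div_le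
    calc _ ≤ 2 * L * ((N : ℝ) / q) := mul_le_mul_of_nonneg_left h1 (by positivity)
      _ = _ := by ring
  · apply mul_le_mul_of_nonneg_left _ h0
    exact_mod_cast (Nat.mod_lt N hq).le

end equi

lemma fejer_sum (g : ℤ → ℝ) (M : ℕ) :
    ∑ m ∈ Finset.Icc (-(M : ℤ) + 1) ((M : ℤ) - 1), ((M : ℝ) - |(m : ℝ)|) * g m =
      ∑ n ∈ Finset.range M, ∑ m ∈ Finset.Icc (-(n : ℤ)) n, g m := by
  induction M with
  | zero => simp
  | succ M ih =>
    rw [Finset.sum_range_succ, ← ih]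
    have e1 : Finset.Icc (-((M + 1 : ℕ) : ℤ) + 1) (((M + 1 : ℕ) : ℤ) - 1) = Finset.Icc (-(M : ℤ)) M := by
      congr 1 <;> push_cast <;> ring
    rw [e1]
    have e2 : ∑ m ∈ Finset.Icc (-(M : ℤ) + 1) ((M : ℤ) - 1), ((M : ℝ) - |(m : ℝ)|) * g m =
       ∑ m ∈ Finset.Icc (-(M : ℤ)) M, ((M : ℝ) - |(m : ℝ)|) * g m := by
      apply Finset.sum_subset
      · apply Finset.Icc_subset_Icc <;> omega
      · intro m h1 h2
        simp only [Finset.mem_Icc] at h1 h2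
        have : |m| = M := by rcases abs_cases m with h | h <;> omega
        have h3 : |(m : ℝ)| = M := by exact_mod_cast this
        rw [h3]; simp
    rw [e2, ← Finset.sum_add_distrib]
    apply Finset.sum_congr rfl
    intro m _
    push_cast
    ring

lemma sum_symm (g : ℤ → ℝ) (n : ℕ) :
    ∑ m ∈ Finset.Icc (-(n : ℤ)) n, g m = ∑ j ∈ Finset.range (2 * n + 1), g ((j : ℤ) - n) := by
  symm
  refine Finset.sum_nbij (fun j : ℕ => (j : ℤ) - n) ?_ ?_ ?_ ?_
  · intro j hj
    simp only [Finset.mem_range, Finset.mem_Icc] at hj ⊢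
    omega
  · intro a _ b _ h
    simp only at h
    omega
  · intro m hm
    simp only [Finset.coe_Icc, Set.mem_Icc] at hm
    refine ⟨(m + n).toNat, ?_, ?_⟩
    · simp only [Finset.coe_range, Set.mem_Iio]; omega
    · simp only; omega
  · intro j _; rfl

lemma sum_odd (M : ℕ) : ∑ n ∈ Finset.range M, ((2 * n + 1 : ℕ) : ℝ) = (M : ℝ) ^ 2 := by
  induction M with
  | zero => simp
  | succ M ih => rw [Finset.sum_range_succ, ih]; push_cast; ring

lemma weights_one (M : ℕ) (hM : 0 < M) :
    ∑ m ∈ Finset.Icc (-(M : ℤ) + 1) ((M : ℤ) - 1), ((M : ℝ) - |(m : ℝ)|) / (M : ℝ) ^ 2 = 1 := by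
  rw [← Finset.sum_div]
  have := fejer_sum (fun _ => 1) M
  simp only [mul_one] at this
  rw [this]
  rw [Finset.sum_congr rfl (fun n _ => sum_symm (fun _ => (1:ℝ)) n)]
  simp only [Finset.sum_const, Finset.card_range, nsmul_eq_mul, mul_one]
  rw [sum_odd]
  have : (M : ℝ) ≠ 0 := by exact_mod_cast hM.ne'
  field_simp

lemma weights_nonneg (M : ℕ) :
    ∀ m ∈ Finset.Icc (-(M : ℤ) + 1) ((M : ℤ) - 1), 0 ≤ ((M : ℝ) - |(m : ℝ)|) / (M : ℝ) ^ 2 := by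
  intro m hm
  rw [Finset.mem_Icc] at hm
  have : |m| ≤ M := by rw [abs_le]; constructor <;> omega
  have : |(m : ℝ)| ≤ M := by exact_mod_cast this
  apply div_nonneg _ (by positivity)
  linarith

lemma fejer_bound {f : ℝ → ℝ} {L : ℝ} (hf : Function.Periodic f 1) (hL : ∀ x y, |f x - f y| ≤ L * |x - y|) (ω : ℝ) (q : ℕ) (hq : 0 < q)
    (p : ℤ) (hpq : IsCoprime p (q : ℤ)) (happ : |ω - p / q| ≤ 1 / (q * q)) (M : ℕ) (hM : 0 < M) (x : ℝ) :
    |∑ m ∈ Finset.Icc (-(M : ℤ) + 1) ((M : ℤ) - 1), ((M : ℝ) - |(m : ℝ)|) / (M : ℝ) ^ 2 * f (x + m * ω)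
      - ∫ t in (0:ℝ)..1, f t| ≤ L * (2 / q + q / M) := by
  set I := ∫ t in (0:ℝ)..1, f t with hI
  have hM' : (0 : ℝ) < M := by exact_mod_cast hM
  have e : ∑ m ∈ Finset.Icc (-(M : ℤ) + 1) ((M : ℤ) - 1), ((M : ℝ) - |(m : ℝ)|) / (M : ℝ) ^ 2 * f (x + m * ω) - I
     = (∑ m ∈ Finset.Icc (-(M : ℤ) + 1) ((M : ℤ) - 1), ((M : ℝ) - |(m : ℝ)|) * (f (x + m * ω) - I)) / (M : ℝ) ^ 2 := by
    have h1 : I = ∑ m ∈ Finset.Icc (-(M : ℤ) + 1) ((M : ℤ) - 1), ((M : ℝ) - |(m : ℝ)|) / (M : ℝ) ^ 2 * I := by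
      rw [← Finset.sum_mul, weights_one M hM, one_mul]
    conv_lhs => rw [h1]
    rw [← Finset.sum_sub_distrib, Finset.sum_div]
    apply Finset.sum_congr rfl
    intro m _
    ring
  rw [e, fejer_sum (fun m => f (x + m * ω) - I), abs_div, abs_of_pos (by positivity : 0 < (M : ℝ) ^ 2), div_le_iff₀ (by positivity)]
  calc _ ≤ ∑ n ∈ Finset.range M, (2 * L / q * ((2 * n + 1 : ℕ) : ℝ) + L * q) := by
        refine (Finset.abs_sum_le_sum_abs _ _).trans (Finset.sum_le_sum fun n _ => ?_)
        rw [sum_symm]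
        have := birk2 hf hL ω q hq p hpq happ (2 * n + 1) (x - n * ω)
        refine le_of_eq_of_le ?_ this
        congr 1
        apply Finset.sum_congr rfl
        intro j _
        congr 2
        push_cast; ring
    _ = _ := by
        rw [Finset.sum_add_distrib, ← Finset.mul_sum, sum_odd, Finset.sum_const, Finset.card_range, nsmul_eq_mul]
        field_simp

lemma equi (c A : ℝ) (hc : 0 < c) (hA : 1 ≤ A) : ∃ C : ℝ, 0 < C ∧ ∀ ω, IsDC c A ω → ∀ M : ℕ, 0 < M →
    ∀ (f : ℝ → ℝ) (L : ℝ), Function.Periodic f 1 → (∀ x y, |f x - f y| ≤ L * |x - y|) → ∀ x,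
    |∑ m ∈ Finset.Icc (-(M : ℤ) + 1) ((M : ℤ) - 1), ((M : ℝ) - |(m : ℝ)|) / (M : ℝ) ^ 2 * f (x + m * ω)
      - ∫ t in (0:ℝ)..1, f t| ≤ L * (C * (M : ℝ) ^ (-(1 / (2 * A)))) := by
  have hA0 : 0 < A := by linarith
  refine ⟨2 * c ^ (-(1 / A)) + 1, by positivity, ?_⟩
  intro ω hω M hM f L hf hL x
  have h0 : 0 ≤ L := by
    have := (abs_nonneg _).trans (hL 1 0); simpa using this
  have hM1 : (1 : ℝ) ≤ M := by exact_mod_cast hM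
  have hM' : (0 : ℝ) < M := by linarith
  obtain ⟨a, ha1, ha2⟩ := Real.exists_rat_abs_sub_le_and_den_le ω (Nat.sqrt_pos.mpr hM)
  set n := Nat.sqrt M with hn
  have hq : 0 < a.den := a.den_pos
  have hq' : (0 : ℝ) < a.den := by exact_mod_cast hq
  have hqn : (a.den : ℝ) ≤ n := by exact_mod_cast ha2
  have hn0 : (0 : ℝ) ≤ n := Nat.cast_nonneg _
  have hacast : (a : ℝ) = (a.num : ℝ) / (a.den : ℝ) := by
    exact_mod_cast (Rat.num_div_den a).symm
  have happ : |ω - (a.num : ℝ) / (a.den : ℝ)| ≤ 1 / (a.den * a.den) := by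
    rw [← hacast]
    refine ha1.trans (one_div_le_one_div_of_le (by positivity) ?_)
    apply mul_le_mul_of_nonneg_right _ hq'.le
    linarith
  have hcop : IsCoprime a.num (a.den : ℤ) := by
    rw [Int.isCoprime_iff_nat_coprime]; exact a.reduced
  have main := fejer_bound hf hL ω a.den hq a.num hcop happ M hM x
  refine main.trans (mul_le_mul_of_nonneg_left ?_ h0)
  have hs1 : (n : ℝ) ≤ (M : ℝ) ^ (1 / 2 : ℝ) := by
    rw [← Real.sqrt_eq_rpow]; exact Real.nat_sqrt_le_real_sqrt
  have hs2 : (M : ℝ) ^ (1 / 2 : ℝ) ≤ n + 1 := by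
    rw [← Real.sqrt_eq_rpow]; exact Real.real_sqrt_le_nat_sqrt_succ
  -- bound on q / M
  have b1 : (a.den : ℝ) / M ≤ (M : ℝ) ^ (-(1 / (2 * A))) := by
    calc (a.den : ℝ) / M ≤ (M : ℝ) ^ (1 / 2 : ℝ) / M := by
          apply div_le_div_of_nonneg_right _ hM'.le; linarith
      _ = (M : ℝ) ^ (-(1 / 2) : ℝ) := by
          nth_rw 2 [← Real.rpow_one (M : ℝ)]
          rw [← Real.rpow_sub hM']; norm_num
      _ ≤ _ := by
          apply Real.rpow_le_rpow_of_exponent_le hM1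
          rw [neg_le_neg_iff]
          apply one_div_le_one_div_of_le <;> linarith
  have b2 : 1 / (a.den : ℝ) ≤ c ^ (-(1 / A)) * (M : ℝ) ^ (-(1 / (2 * A))) := by
    have h1 := hω a.den (by exact_mod_cast hq.ne')
    have h2 : distToInt (((a.den : ℤ) : ℝ) * ω) ≤ 1 / (n + 1) := by
      refine (round_le _ a.num).trans ?_
      push_cast
      have : (a.den : ℝ) * ω - a.num = a.den * (ω - a) := by
        rw [hacast]; field_simp
      rw [this, abs_mul, abs_of_pos hq']
      calc (a.den : ℝ) * |ω - a| ≤ a.den * (1 / ((n + 1) * a.den)) := mul_le_mul_of_nonneg_left ha1 hq'.le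
        _ = _ := by field_simp
    have h3 := h1.trans_le h2
    push_cast at h3
    rw [abs_of_pos hq'] at h3
    have h4 : c * (M : ℝ) ^ (1 / 2 : ℝ) ≤ (a.den : ℝ) ^ A := by
      rw [Real.rpow_neg hq'.le, ← div_eq_mul_inv, div_lt_div_iff₀ (by positivity) (by positivity)] at h3
      nlinarith
    have h5 : (c * (M : ℝ) ^ (1 / 2 : ℝ)) ^ (1 / A) ≤ a.den := by
      calc _ ≤ ((a.den : ℝ) ^ A) ^ (1 / A) := Real.rpow_le_rpow (by positivity) h4 (by positivity)
        _ = _ := by rw [← Real.rpow_mul hq'.le, mul_one_div_cancel hA0.ne', Real.rpow_one]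
    have h6 : c ^ (-(1 / A)) * (M : ℝ) ^ (-(1 / (2 * A))) = 1 / (c * (M : ℝ) ^ (1 / 2 : ℝ)) ^ (1 / A) := by
      have e1 : (1 / 2 * (1 / A) : ℝ) = 1 / (2 * A) := by field_simp
      rw [Real.mul_rpow hc.le (by positivity), ← Real.rpow_mul hM'.le, e1, Real.rpow_neg hc.le, Real.rpow_neg hM'.le,
        ← mul_inv, inv_eq_one_div]
    rw [h6]
    exact one_div_le_one_div_of_le (by positivity) h5
  have : (2 : ℝ) / a.den = 2 * (1 / a.den) := by ring
  rw [this]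
  nlinarith

noncomputable def LQ (E : Set ℝ) (d : ℝ) (z : ℂ) : ℝ := ∫ t in E, Real.log (max ‖z - (t : ℂ)‖ d)

lemma LQ_jc {d : ℝ} (hd : 0 < d) : Continuous (fun p : ℂ × ℝ => Real.log (max ‖p.1 - (p.2 : ℂ)‖ d)) := by
  apply Continuous.log
  · fun_prop
  · intro p
    exact (lt_max_of_lt_right hd).ne'

lemma LQ_cont {E : Set ℝ} (hE : IsCompact E) {d : ℝ} (hd : 0 < d) : Continuous (LQ E d) :=
  continuous_parametric_integral_of_continuous (f := fun (z : ℂ) (t : ℝ) => Real.log (max ‖z - (t : ℂ)‖ d)) (LQ_jc hd) hE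

lemma log_mean {z : ℂ} {r : ℝ} (hr : 0 < r) {t : ℝ} {d : ℝ} (hd : 0 < d)
    (h : ∀ y ∈ Metric.closedBall z r, d ≤ ‖y - (t : ℂ)‖) :
    Real.circleAverage (fun y => Real.log (max ‖y - (t : ℂ)‖ d)) z r = Real.log (max ‖z - (t : ℂ)‖ d) := by
  have e : Real.circleAverage (fun y => Real.log (max ‖y - (t : ℂ)‖ d)) z r =
      Real.circleAverage (fun y => Real.log ‖y - (t : ℂ)‖) z r := by
    apply Real.circleAverage_congr_sphere
    intro y hy
    rw [abs_of_pos hr] at hy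
    show Real.log (max ‖y - (t : ℂ)‖ d) = Real.log ‖y - (t : ℂ)‖
    rw [max_eq_left (h y (Metric.sphere_subset_closedBall hy))]
  rw [e, max_eq_left (h z (Metric.mem_closedBall_self hr.le))]
  apply InnerProductSpace.HarmonicOnNhd.circleAverage_eq (f := fun y : ℂ => Real.log ‖y - (t : ℂ)‖)
  intro y hy
  rw [abs_of_pos hr] at hy
  apply AnalyticAt.harmonicAt_log_norm (f := fun y : ℂ => y - (t : ℂ)) (by fun_prop)
  have := h y hy
  intro h0
  rw [h0, norm_zero] at this
  linarith

lemma LQ_mean {E : Set ℝ} (hE : IsCompact E) {d : ℝ} (hd : 0 < d) {z : ℂ} {r : ℝ} (hr : 0 < r)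
    (h : ∀ y ∈ Metric.closedBall z r, ∀ t ∈ E, d ≤ ‖y - (t : ℂ)‖) :
    Real.circleAverage (LQ E d) z r = LQ E d z := by
  have hp : (0:ℝ) ≤ 2 * Real.pi := by positivity
  have hj : Continuous (fun p : ℝ × ℝ => Real.log (max ‖circleMap z r p.1 - (p.2 : ℂ)‖ d)) :=
    (LQ_jc hd).comp (((continuous_circleMap z r).comp continuous_fst).prodMk continuous_snd)
  rw [Real.circleAverage_def]
  unfold LQ
  rw [intervalIntegral_integral_swap]
  · rw [← integral_smul]
    apply setIntegral_congr_fun hE.measurableSet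
    intro t ht
    exact log_mean hr hd (fun y hy => h y hy t ht)
  · rw [Set.uIoc_of_le hp, Measure.prod_restrict]
    apply IntegrableOn.mono_set (t := Set.Icc 0 (2 * Real.pi) ×ˢ E)
    · exact hj.continuousOn.integrableOn_compact (isCompact_Icc.prod hE)
    · exact Set.prod_mono Set.Ioc_subset_Icc_self le_rfl

lemma log_int (x l : ℝ) :
    IntervalIntegrable (fun t => Real.log l - Real.log |t - x|) volume (x - l) (x + l) ∧
    ∫ t in (x - l)..(x + l), (Real.log l - Real.log |t - x|) = 2 * l := by
  simp only [Real.log_abs]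
  have h1 : IntervalIntegrable (fun s => Real.log l - Real.log s) volume (-l) l :=
    intervalIntegrable_const.sub intervalIntegral.intervalIntegrable_log'
  have h2 := h1.comp_sub_right x
  have e1 : -l + x = x - l := by ring
  have e2 : l + x = x + l := by ring
  rw [e1, e2] at h2
  refine ⟨h2, ?_⟩
  rw [intervalIntegral.integral_comp_sub_right (fun s => Real.log l - Real.log s) x]
  have e3 : x - l - x = -l := by ring
  have e4 : x + l - x = l := by ring
  rw [e3, e4, intervalIntegral.integral_sub (by simp) intervalIntegral.intervalIntegrable_log', integral_log]
  simp
  ring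

lemma LQ_lower {E : Set ℝ} (hE : IsCompact E) {d : ℝ} (hd : 0 < d) {l : ℝ} (hl : 0 < l)
    (hlE : volume.real E = l) (z : ℂ) : l * Real.log l - 2 * l ≤ LQ E d z := by
  obtain ⟨hi, hv⟩ := log_int z.re l
  have hle : z.re - l ≤ z.re + l := by linarith
  rw [intervalIntegrable_iff_integrableOn_Ioc_of_le hle] at hi
  rw [intervalIntegral.integral_of_le hle] at hv
  set S := Set.Ioc (z.re - l) (z.re + l) with hS
  set φ : ℝ → ℝ := S.indicator (fun t => Real.log l - Real.log |t - z.re|) with hφ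
  have hφi : Integrable φ := hi.integrable_indicator measurableSet_Ioc
  have hφv : ∫ t, φ t = 2 * l := by rw [hφ, integral_indicator measurableSet_Ioc, hv]
  have hae : ∀ᵐ t : ℝ, t ≠ z.re := by
    rw [ae_iff]; simp
  have hφ0 : 0 ≤ᵐ[volume] φ := by
    filter_upwards [hae] with t ht
    show 0 ≤ φ t
    by_cases hts : t ∈ S
    swap
    · rw [hφ, Set.indicator_of_notMem hts]
    rw [hφ, Set.indicator_of_mem hts]
    have h1 : 0 < |t - z.re| := abs_pos.mpr (sub_ne_zero.mpr ht)
    have h2 : |t - z.re| ≤ l := by rw [abs_le]; constructor <;> linarith [hts.1, hts.2]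
    exact sub_nonneg.mpr (Real.log_le_log h1 h2)
  have hEf : volume E ≠ ⊤ := hE.measure_lt_top.ne
  have hpt : ∀ᵐ t : ℝ, Real.log l - φ t ≤ Real.log (max ‖z - (t : ℂ)‖ d) := by
    filter_upwards [hae] with t ht
    have h1 : 0 < |t - z.re| := abs_pos.mpr (sub_ne_zero.mpr ht)
    have h3 : |t - z.re| ≤ max ‖z - (t : ℂ)‖ d := by
      apply le_max_of_le_left
      have := Complex.abs_re_le_norm (z - (t : ℂ))
      rw [Complex.sub_re, Complex.ofReal_re, abs_sub_comm] at this
      exact this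
    have h4 := Real.log_le_log h1 h3
    by_cases hts : t ∈ S
    · rw [hφ, Set.indicator_of_mem hts]
      linarith
    · rw [hφ, Set.indicator_of_notMem hts, sub_zero]
      refine le_trans (Real.log_le_log hl ?_) h4
      by_contra hcon
      push Not at hcon
      rw [abs_lt] at hcon
      exact hts ⟨by linarith, by linarith⟩
  have h5 : ∫ t in E, (Real.log l - φ t) ≤ LQ E d z := by
    apply setIntegral_mono_ae
    · exact (integrableOn_const hEf).sub hφi.integrableOn
    · apply Continuous.continuousOn _ |>.integrableOn_compact hE
      exact (LQ_jc hd).comp (continuous_const.prodMk continuous_id)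
    · exact hpt
  have hci : Integrable (fun _ : ℝ => Real.log l) (volume.restrict E) := integrableOn_const hEf
  rw [integral_sub hci hφi.integrableOn, setIntegral_const, hlE, smul_eq_mul] at h5
  have h6 := setIntegral_le_integral hφi (s := E) hφ0
  linarith

lemma LQ_le {E : Set ℝ} (hE : IsCompact E) {d : ℝ} (hd : 0 < d) (z : ℂ) (R : ℝ)
    (h : ∀ t ∈ E, max ‖z - (t : ℂ)‖ d ≤ R) : LQ E d z ≤ volume.real E * Real.log R := by
  rw [← smul_eq_mul, ← setIntegral_const]
  apply setIntegral_mono_on _ (integrableOn_const hE.measure_lt_top.ne) hE.measurableSet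
  · intro t ht
    exact Real.log_le_log (lt_max_of_lt_right hd) (h t ht)
  · apply Continuous.continuousOn _ |>.integrableOn_compact hE
    exact (LQ_jc hd).comp (continuous_const.prodMk continuous_id)

lemma LQ_ge {E : Set ℝ} (hE : IsCompact E) {d : ℝ} (hd : 0 < d) (z : ℂ) (R : ℝ) (hR : 0 < R)
    (h : ∀ t ∈ E, R ≤ max ‖z - (t : ℂ)‖ d) : volume.real E * Real.log R ≤ LQ E d z := by
  rw [← smul_eq_mul, ← setIntegral_const]
  apply setIntegral_mono_on (integrableOn_const hE.measure_lt_top.ne) _ hE.measurableSet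
  · intro t ht
    exact Real.log_le_log hR (h t ht)
  · apply Continuous.continuousOn _ |>.integrableOn_compact hE
    exact (LQ_jc hd).comp (continuous_const.prodMk continuous_id)

lemma two_const {v : ℂ → ℝ} {a ρ : ℝ} (hρ : 0 < ρ) (hc : ContinuousOn v (Metric.closedBall (a : ℂ) ρ))
    (hs : SMean (Metric.closedBall (a : ℂ) ρ) v) {ε T : ℝ} (hT : 0 ≤ T)
    (hε : ∀ z ∈ Metric.closedBall (a : ℂ) ρ, v z ≤ ε) {E : Set ℝ} (hE : IsCompact E)
    (hEs : E ⊆ Set.Icc (a - ρ / 4) (a + ρ / 4)) {l : ℝ} (hl : 0 < l) (hlE : volume.real E = l)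
    (hvE : ∀ t ∈ E, v (t : ℂ) ≤ ε - T) :
    ∀ x ∈ Set.Icc (a - ρ / 4) (a + ρ / 4),
      v (x : ℂ) ≤ ε - T * Real.log (3 / 2) / (2 + Real.log (3 * ρ / (4 * l))) := by
  intro x hx
  have hl2 : l ≤ ρ / 2 := by
    have h1 : volume.real E ≤ volume.real (Set.Icc (a - ρ / 4) (a + ρ / 4)) :=
      measureReal_mono hEs (by simp)
    rw [hlE, Real.volume_real_Icc_of_le (by linarith)] at h1
    linarith
  have hlog : Real.log (3 / 2) ≤ Real.log (3 * ρ / (4 * l)) := by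
    apply Real.log_le_log (by norm_num)
    rw [div_le_div_iff₀ (by norm_num) (by positivity)]
    linarith
  have hlog0 : 0 < Real.log (3 / 2) := Real.log_pos (by norm_num)
  set Λ := 2 + Real.log (3 * ρ / (4 * l)) with hΛ
  have hΛ0 : 0 < Λ := by linarith
  set κ := T / Λ with hκ
  have hκ0 : 0 ≤ κ := by positivity
  have hκΛ : κ * Λ = T := by rw [hκ]; field_simp
  have hgoal : ε - T * Real.log (3 / 2) / Λ = ε - κ * Real.log (3 / 2) := by rw [hκ]; ring
  rw [hgoal]
  have hΛe : Λ = 2 + Real.log (3 * ρ / 4) - Real.log l := by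
    rw [hΛ, ← div_div, Real.log_div (by positivity) hl.ne']; ring
  by_cases hxE : x ∈ E
  · refine (hvE x hxE).trans ?_
    have : κ * Real.log (3 / 2) ≤ κ * Λ := mul_le_mul_of_nonneg_left (by linarith) hκ0
    linarith
  have hEne : E.Nonempty := by
    rw [Set.nonempty_iff_ne_empty]
    rintro rfl
    simp at hlE
    linarith
  set E' : Set ℂ := (fun t : ℝ => (t : ℂ)) '' E with hE'
  have hE'c : IsCompact E' := hE.image Complex.continuous_ofReal
  have hE'ne : E'.Nonempty := hEne.image _
  have hxE' : (x : ℂ) ∉ E' := by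
    rintro ⟨t, ht, h⟩
    exact hxE (by rw [← Complex.ofReal_injective h]; exact ht)
  have hpos : 0 < Metric.infDist (x : ℂ) E' :=
    (hE'c.isClosed.notMem_iff_infDist_pos hE'ne).mp hxE'
  have hball : ∀ t ∈ Set.Icc (a - ρ / 4) (a + ρ / 4), ((t : ℝ) : ℂ) ∈ Metric.closedBall (a : ℂ) ρ := by
    intro t ht
    rw [Metric.mem_closedBall, Complex.dist_eq, ← Complex.ofReal_sub, Complex.norm_real, Real.norm_eq_abs, abs_le]
    constructor <;> linarith [ht.1, ht.2]
  apply le_of_forall_pos_le_add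
  intro η hη
  have huc := (isCompact_closedBall (a : ℂ) ρ).uniformContinuousOn_of_continuous hc
  rw [Metric.uniformContinuousOn_iff] at huc
  obtain ⟨δ, hδ, hδv⟩ := huc η hη
  obtain ⟨d, hd, hd1, hd2, hd3⟩ : ∃ d > 0, d < δ ∧ d ≤ ρ / 2 ∧ d ≤ Metric.infDist (x : ℂ) E' := by
    refine ⟨min (δ / 2) (min (ρ / 2) (Metric.infDist (x : ℂ) E')), by positivity, ?_, ?_, ?_⟩
    · exact (min_le_left _ _).trans_lt (by linarith)
    · exact (min_le_right _ _).trans (min_le_left _ _)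
    · exact (min_le_right _ _).trans (min_le_right _ _)
  set q : ℂ → ℝ := fun z => LQ E d z / l - Real.log (3 * ρ / 4) with hq
  have hqc : Continuous q := ((LQ_cont hE hd).div_const l).sub continuous_const
  have hqlow : ∀ z, -Λ ≤ q z := by
    intro z
    have := LQ_lower hE hd hl hlE z
    have h2 : Real.log l - 2 ≤ LQ E d z / l := by
      rw [le_div_iff₀ hl]; linarith
    rw [hΛe]
    show _ ≤ LQ E d z / l - Real.log (3 * ρ / 4)
    linarith
  set K : Set ℂ := Metric.closedBall (a : ℂ) ρ ∩ {z | d ≤ Metric.infDist z E'} with hK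
  have hKc : IsCompact K := (isCompact_closedBall _ _).inter_right
    (isClosed_le continuous_const (Metric.continuous_infDist_pt _))
  have key : ∀ z ∈ K, v z - ε - κ * q z ≤ η := by
    apply max_principle hKc
    · exact ((hc.mono Set.inter_subset_left).sub continuousOn_const).sub (hqc.const_mul κ).continuousOn
    rintro z ⟨hz1, hz2⟩ hz3
    have hz2' : d ≤ Metric.infDist z E' := hz2
    have hlt1 : z ∈ Metric.ball (a : ℂ) ρ := by
      rw [Metric.mem_ball]
      refine lt_of_le_of_ne (Metric.mem_closedBall.mp hz1) ?_
      intro heq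
      have hq0 : 0 ≤ q z := by
        have := LQ_ge hE hd z (3 * ρ / 4) (by positivity) (by
          intro t ht
          apply le_max_of_le_left
          have h1 := dist_triangle z (t : ℂ) (a : ℂ)
          have h2 : dist ((t : ℝ) : ℂ) (a : ℂ) ≤ ρ / 4 := by
            rw [Complex.dist_eq, ← Complex.ofReal_sub, Complex.norm_real, Real.norm_eq_abs, abs_le]
            constructor <;> linarith [(hEs ht).1, (hEs ht).2]
          rw [← Complex.dist_eq]
          linarith)
        rw [hlE] at this
        have h2 : Real.log (3 * ρ / 4) ≤ LQ E d z / l := by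
          rw [le_div_iff₀ hl]; linarith
        show 0 ≤ LQ E d z / l - Real.log (3 * ρ / 4)
        linarith
      have := hε z hz1
      have := mul_nonneg hκ0 hq0
      linarith
    have hlt2 : d < Metric.infDist z E' := by
      refine lt_of_le_of_ne hz2' ?_
      intro heq
      obtain ⟨y, ⟨t, ht, rfl⟩, hyd⟩ := hE'c.exists_infDist_eq_dist hE'ne z
      have h1 := hδv z hz1 (t : ℂ) (hball t (hEs ht)) (by rw [← hyd, ← heq]; exact hd1)
      rw [Real.dist_eq, abs_lt] at h1
      have h2 := hvE t ht
      have h3 := mul_le_mul_of_nonneg_left (hqlow z) hκ0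
      linarith
    have hopen : IsOpen (Metric.ball (a : ℂ) ρ ∩ {z | d < Metric.infDist z E'}) :=
      Metric.isOpen_ball.inter (isOpen_lt continuous_const (Metric.continuous_infDist_pt _))
    obtain ⟨r, hr, hrs⟩ := Metric.nhds_basis_closedBall.mem_iff.mp (hopen.mem_nhds ⟨hlt1, hlt2⟩)
    have hsub1 : Metric.closedBall z r ⊆ Metric.closedBall (a : ℂ) ρ :=
      fun y hy => Metric.ball_subset_closedBall (hrs hy).1
    refine ⟨r, hr, fun y hy => ⟨hsub1 hy, show d ≤ Metric.infDist y E' from le_of_lt (hrs hy).2⟩, ?_⟩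
    have m1 := hs z r hr hsub1
    have m2 : Real.circleAverage (LQ E d) z r = LQ E d z := by
      apply LQ_mean hE hd hr
      intro y hy t ht
      have h1 : d < Metric.infDist y E' := (hrs hy).2
      have h2 : Metric.infDist y E' ≤ dist y (t : ℂ) := Metric.infDist_le_dist_of_mem ⟨t, ht, rfl⟩
      rw [Complex.dist_eq] at h2
      linarith
    have i1 : CircleIntegrable v z r := circleInt_of_contOn hc hr hsub1
    have i2 : CircleIntegrable (LQ E d) z r := (LQ_cont hE hd).continuousOn.circleIntegrable hr.le
    have e : (fun z => v z - ε - κ * q z) = fun z => (v z - (κ / l) • LQ E d z) - (ε - κ * Real.log (3 * ρ / 4)) := by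
      ext y
      simp only [hq, smul_eq_mul]
      ring
    have i3 : CircleIntegrable (fun z => (κ / l) • LQ E d z) z r := 
      ((LQ_cont hE hd).const_smul (κ / l)).continuousOn.circleIntegrable hr.le
    have e2 : Real.circleAverage (fun z => v z - ε - κ * q z) z r =
       Real.circleAverage v z r - (κ / l) * LQ E d z - (ε - κ * Real.log (3 * ρ / 4)) := by
      have i4 : CircleIntegrable (fun z => v z - (κ / l) • LQ E d z) z r := i1.sub i3
      rw [e, Real.circleAverage_fun_sub i4 (circleIntegrable_const _ _ _), Real.circleAverage_const,
        Real.circleAverage_fun_sub i1 i3, Real.circleAverage_fun_smul, m2, smul_eq_mul]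
    rw [e2, congrFun e z]
    simp only [smul_eq_mul]
    linarith
  have hxK := key (x : ℂ) ⟨hball x hx, hd3⟩
  have hqx : q x ≤ -Real.log (3 / 2) := by
    have := LQ_le hE hd (x : ℂ) (ρ / 2) (by
      intro t ht
      apply max_le _ hd2
      rw [← Complex.ofReal_sub, Complex.norm_real, Real.norm_eq_abs, abs_le]
      constructor <;> linarith [(hEs ht).1, (hEs ht).2, hx.1, hx.2])
    rw [hlE] at this
    have h2 : LQ E d x / l ≤ Real.log (ρ / 2) := by
      rw [div_le_iff₀ hl]; linarith
    have h3 : Real.log (3 * ρ / 4) = Real.log (3 / 2) + Real.log (ρ / 2) := by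
      rw [← Real.log_mul (by norm_num) (by positivity)]
      congr 1
      ring
    show LQ E d x / l - Real.log (3 * ρ / 4) ≤ _
    linarith
  have := mul_le_mul_of_nonneg_left hqx hκ0
  linarith

lemma local_bound {v : ℂ → ℝ} (hc : ContinuousOn v Stp) (hs : SMean Stp v) {B ρ lam : ℝ} (hB : 1 ≤ B)
    (hρ0 : 0 < ρ) (hρ : ρ ≤ 1 / 2) (hv2 : ∀ z : ℂ, |z.im| ≤ ρ → v z ≤ 5 * B * ρ)
    (hv1 : ∀ x : ℝ, v (x : ℂ) ≤ 5 * B * ρ ^ 2) (hf : Continuous (fun x : ℝ => v (x : ℂ)))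
    (hper : Function.Periodic (fun x : ℝ => v (x : ℂ)) 1)
    (hint : ∫ t in (0:ℝ)..1, v (t : ℂ) = 0) (hlam : 0 < lam) (a : ℝ) :
    volume (Set.Icc (a - ρ / 4) (a + ρ / 4) ∩ {x : ℝ | v (x : ℂ) ≤ -lam}) ≤
      ENNReal.ofReal (3 * ρ / 4 * Real.exp (2 - lam / (45 * B * ρ))) := by
  set E := Set.Icc (a - ρ / 4) (a + ρ / 4) ∩ {x : ℝ | v (x : ℂ) ≤ -lam} with hE
  have hEc : IsCompact E := isCompact_Icc.inter_right (isClosed_le hf continuous_const)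
  rw [← ENNReal.ofReal_toReal hEc.measure_lt_top.ne]
  apply ENNReal.ofReal_le_ofReal
  change volume.real E ≤ _
  rcases (measureReal_nonneg (μ := volume) (s := E)).eq_or_lt with h0 | hl
  · rw [← h0]; positivity
  set l := volume.real E with hlE
  have hsub : Metric.closedBall (a : ℂ) ρ ⊆ {z : ℂ | |z.im| ≤ ρ} := by
    intro z hz
    rw [Metric.mem_closedBall, Complex.dist_eq] at hz
    have := Complex.abs_im_le_norm (z - a)
    simp only [Complex.sub_im, Complex.ofReal_im, sub_zero] at this
    exact this.trans hz
  have hsub2 : Metric.closedBall (a : ℂ) ρ ⊆ Stp := by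
    intro z hz
    have : |z.im| ≤ ρ := hsub hz
    show |z.im| < 1
    linarith
  have hB0 : 0 < B := by linarith
  have htc := two_const hρ0 (hc.mono hsub2) (fun z r hr h => hs z r hr (h.trans hsub2)) (ε := 5 * B * ρ) hlam.le
    (fun z hz => hv2 z (hsub hz)) hEc Set.inter_subset_left hl rfl (by
      intro t ht
      have h1 : v (t : ℂ) ≤ -lam := ht.2
      have : 0 < 5 * B * ρ := by positivity
      linarith)
  set Λ := 2 + Real.log (3 * ρ / (4 * l)) with hΛ
  have hl2 : l ≤ ρ / 2 := by
    have h1 : volume.real E ≤ volume.real (Set.Icc (a - ρ / 4) (a + ρ / 4)) :=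
      measureReal_mono Set.inter_subset_left (by simp)
    rw [Real.volume_real_Icc_of_le (by linarith)] at h1
    linarith
  have hΛ0 : 0 < Λ := by
    have : 0 ≤ Real.log (3 * ρ / (4 * l)) := by
      apply Real.log_nonneg
      rw [le_div_iff₀ (by positivity)]
      linarith
    linarith
  set κ := lam * Real.log (3 / 2) / Λ with hκ
  have hsplit : 0 ≤ ρ / 2 * (5 * B * ρ - κ) + (1 - ρ / 2) * (5 * B * ρ ^ 2) := by
    have h1 := hper.intervalIntegral_add_eq (a - ρ / 4) 0
    rw [zero_add] at h1
    rw [hint, ← intervalIntegral.integral_add_adjacent_intervals (hf.intervalIntegrable _ (a + ρ / 4)) (hf.intervalIntegrable _ _)] at h1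
    have h2 : ∫ x in (a - ρ / 4)..(a + ρ / 4), v (x : ℂ) ≤ ∫ x in (a - ρ / 4)..(a + ρ / 4), (5 * B * ρ - κ) :=
      intervalIntegral.integral_mono_on (by linarith) (hf.intervalIntegrable _ _) (by simp) (fun x hx => htc x hx)
    have h3 : ∫ x in (a + ρ / 4)..(a - ρ / 4 + 1), v (x : ℂ) ≤ ∫ x in (a + ρ / 4)..(a - ρ / 4 + 1), (5 * B * ρ ^ 2) :=
      intervalIntegral.integral_mono_on (by linarith) (hf.intervalIntegrable _ _) (by simp) (fun x hx => hv1 x)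
    rw [intervalIntegral.integral_const, smul_eq_mul] at h2 h3
    have e1 : a + ρ / 4 - (a - ρ / 4) = ρ / 2 := by ring
    have e2 : a - ρ / 4 + 1 - (a + ρ / 4) = 1 - ρ / 2 := by ring
    rw [e1] at h2
    rw [e2] at h3
    linarith
  have hκ15 : κ ≤ 15 * B * ρ := by
    have h1 : ρ / 2 * κ ≤ ρ / 2 * (15 * B * ρ) := by
      have : 0 ≤ ρ / 2 * (5 * B * ρ ^ 2) := by positivity
      nlinarith
    exact le_of_mul_le_mul_left h1 (by positivity)
  have hlog : (1 : ℝ) / 3 ≤ Real.log (3 / 2) := by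
    have := Real.one_sub_inv_le_log_of_pos (x := 3 / 2) (by norm_num)
    norm_num at this ⊢
    linarith
  have hΛge : lam / (45 * B * ρ) ≤ Λ := by
    rw [hκ, div_le_iff₀ hΛ0] at hκ15
    rw [div_le_iff₀ (by positivity)]
    nlinarith
  have h1 : Real.log (3 * ρ / (4 * l)) = - Real.log (4 * l / (3 * ρ)) := by
    rw [← Real.log_inv, inv_div]
  have h2 : Real.log (4 * l / (3 * ρ)) ≤ 2 - lam / (45 * B * ρ) := by linarith
  rw [Real.log_le_iff_le_exp (by positivity), div_le_iff₀ (by positivity)] at h2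
  linarith

lemma global_bound (S : Set ℝ) {ρ D : ℝ} (hD : 0 ≤ D)
    (hρ0 : 0 < ρ) (hρ : ρ ≤ 1 / 2)
    (h : ∀ a : ℝ, volume (Set.Icc (a - ρ / 4) (a + ρ / 4) ∩ S) ≤ ENNReal.ofReal (3 * ρ / 4 * D)) :
    volume (Set.Icc 0 1 ∩ S) ≤ ENNReal.ofReal (3 * D) := by
  set N := ⌈2 / ρ⌉₊ with hN
  have hN1 : 2 / ρ ≤ N := Nat.le_ceil _
  have hN2 : (N : ℝ) < 2 / ρ + 1 := Nat.ceil_lt_add_one (by positivity)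
  have hcov : Set.Icc 0 1 ∩ S ⊆ ⋃ k ∈ Finset.range (N + 1),
      (Set.Icc ((k : ℝ) * ρ / 2 - ρ / 4) ((k : ℝ) * ρ / 2 + ρ / 4) ∩ S) := by
    rintro x ⟨⟨hx0, hx1⟩, hxS⟩
    have hnn : 0 ≤ 2 * x / ρ + 1 / 2 := by positivity
    have k1 := Nat.floor_le hnn
    have k2 := Nat.lt_floor_add_one (2 * x / ρ + 1 / 2)
    set k := ⌊2 * x / ρ + 1 / 2⌋₊ with hk
    simp only [Set.mem_iUnion, Finset.mem_range]
    have e : 2 * x / ρ * ρ = 2 * x := by field_simp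
    refine ⟨k, ?_, ⟨?_, ?_⟩, hxS⟩
    · have : 2 * x / ρ ≤ 2 / ρ := by gcongr; linarith
      have : (k : ℝ) < ((N + 1 : ℕ) : ℝ) := by push_cast; linarith
      exact_mod_cast this
    · nlinarith
    · nlinarith
  calc volume (Set.Icc 0 1 ∩ S) ≤ _ := measure_mono hcov
    _ ≤ ∑ k ∈ Finset.range (N + 1), volume (Set.Icc ((k : ℝ) * ρ / 2 - ρ / 4) ((k : ℝ) * ρ / 2 + ρ / 4) ∩ S) :=
        measure_biUnion_finset_le _ _
    _ ≤ ∑ k ∈ Finset.range (N + 1), ENNReal.ofReal (3 * ρ / 4 * D) := Finset.sum_le_sum fun k _ => h _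
    _ = ENNReal.ofReal (((N + 1 : ℕ) : ℝ) * (3 * ρ / 4 * D)) := by
        rw [Finset.sum_const, Finset.card_range, nsmul_eq_mul, ENNReal.ofReal_mul (Nat.cast_nonneg (N + 1)), ENNReal.ofReal_natCast]
    _ ≤ _ := by
        apply ENNReal.ofReal_le_ofReal
        push_cast
        have h1 : ((N : ℝ) + 1) * ρ ≤ 3 := by
          have : 2 / ρ * ρ = 2 := by field_simp
          nlinarith
        nlinarith

/-- Large deviation theorem for Fejér-type averages of subharmonic functions along
a Diophantine shift. One may take `σ = 1/(50A)`. -/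
theorem large_deviation_subharmonic (A : ℝ) (hA : 1 ≤ A) :
    ∃ σ : ℝ, 0 < σ ∧ σ = 1 / (50 * A) ∧
      ∀ c B : ℝ, 0 < c → 1 ≤ B →
        ∃ ctil : ℝ, 0 < ctil ∧ ∃ M₀ : ℕ,
          ∀ ω : ℝ, IsDC c A ω →
          ∀ u : ℝ → ℝ, Function.Periodic u 1 → (∀ x : ℝ, |u x| ≤ 1) →
          ∀ utilde : ℂ → ℝ,
            (∀ x : ℝ, utilde (x : ℂ) = u x) →
            Subharmonic {z : ℂ | |z.im| < 1} utilde →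
            (∀ z : ℂ, |z.im| < 1 → |utilde z| ≤ B) →
          ∀ M : ℕ, M₀ ≤ M →
            volume {x : ℝ | x ∈ Set.Icc (0:ℝ) 1 ∧
                (M : ℝ) ^ (-σ) <
                  |(∑ m ∈ Finset.Icc (-(M : ℤ) + 1) ((M : ℤ) - 1),
                      (((M : ℝ) - (|m| : ℝ)) / (M : ℝ) ^ 2) * u (x + m * ω))
                    - ∫ t in (0:ℝ)..1, u t|}
              < ENNReal.ofReal (Real.exp (-ctil * (M : ℝ) ^ σ)) := by
  have hA0 : 0 < A := by linarith
  have hσ0 : 0 < 1 / (50 * A) := by positivity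
  refine ⟨1 / (50 * A), hσ0, rfl, ?_⟩
  set σ := 1 / (50 * A) with hσ
  intro c B hc hB
  have hB0 : 0 < B := by linarith
  obtain ⟨C, hC, hequi⟩ := equi c A hc hA
  refine ⟨1 / (90 * B), by positivity, ?_⟩
  have hev : ∀ᶠ M : ℕ in Filter.atTop, max (max 2 C) (360 * B) ≤ (M : ℝ) ^ σ :=
    ((tendsto_rpow_atTop hσ0).comp tendsto_natCast_atTop_atTop).eventually_ge_atTop _
  obtain ⟨M₁, hM₁⟩ := Filter.eventually_atTop.mp hev
  refine ⟨max M₁ 1, ?_⟩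
  intro ω hω u hper hb w hwu hsub hwB M hM
  have hM0 : 0 < M := lt_of_lt_of_le Nat.one_pos ((le_max_right _ _).trans hM)
  have hMr : (0 : ℝ) < M := by exact_mod_cast hM0
  have hY := hM₁ M ((le_max_left _ _).trans hM)
  set Y := (M : ℝ) ^ σ with hYd
  have hY2 : 2 ≤ Y := ((le_max_left _ _).trans (le_max_left _ _)).trans hY
  have hYC : C ≤ Y := ((le_max_right _ _).trans (le_max_left _ _)).trans hY
  have hYB : 360 * B ≤ Y := (le_max_right _ _).trans hY
  have hY0 : 0 < Y := by linarith
  have hlam : (M : ℝ) ^ (-σ) = Y⁻¹ := by rw [Real.rpow_neg hMr.le]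
  have hδ : (M : ℝ) ^ (-(1 / (2 * A))) = (Y ^ 25)⁻¹ := by
    rw [Real.rpow_neg hMr.le, hYd, ← Real.rpow_natCast, ← Real.rpow_mul hMr.le]
    congr 2
    rw [hσ]
    push_cast
    field_simp
    norm_num
  have hcw : ContinuousOn w Stp := hsub.1
  have hsw : SMean Stp w := by
    intro z r hr h
    exact hsub.2 z r hr h
  have hu : Continuous u := by
    have : u = fun x : ℝ => w (x : ℂ) := by ext x; rw [hwu]
    rw [this, ← continuousOn_univ]
    exact hcw.comp Complex.continuous_ofReal.continuousOn (fun x _ => by simp [Stp])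
  set s := Finset.Icc (-(M : ℤ) + 1) ((M : ℤ) - 1) with hsd
  set cf : ℤ → ℝ := fun m => ((M : ℝ) - |(m : ℝ)|) / (M : ℝ) ^ 2 with hcf
  set τ : ℤ → ℝ := fun m => m * ω with hτ
  set I := ∫ t in (0:ℝ)..1, u t with hI
  set v : ℂ → ℝ := fun z => ∑ m ∈ s, cf m * w (z + (τ m : ℝ)) - I with hv
  have hcf0 : ∀ m ∈ s, 0 ≤ cf m := weights_nonneg M
  have hcf1 : ∑ m ∈ s, cf m = 1 := weights_one M hM0
  have hup : ∀ r : ℝ, 0 < r → r ≤ 1 / 2 → ∀ z : ℂ, |z.im| ≤ r → v z ≤ C * (Y ^ 25)⁻¹ / r + 4 * B * r := by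
    intro r hr hr2
    refine upper hB hu hb hper hwu hcw hsw hwB s cf τ hcf0 hcf1 (δ := C * (Y ^ 25)⁻¹) ?_ hr hr2
    intro f L hf hL x
    have := hequi ω hω M hM0 f L hf hL x
    rw [hδ] at this
    exact this
  have hvr : ∀ x : ℝ, v (x : ℂ) = ∑ m ∈ s, cf m * u (x + m * ω) - I := by
    intro x
    simp only [hv]
    congr 1
    apply Finset.sum_congr rfl
    intro m _
    rw [← hwu, hτ]
    push_cast
    rfl
  have hvc : ContinuousOn v Stp := (wsum_cont hcw s cf τ).sub continuousOn_const
  have hvs : SMean Stp v := by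
    intro z r hr h
    have h1 := wsum_smean hcw hsw s cf τ hcf0 z r hr h
    have h2 : Real.circleAverage v z r = Real.circleAverage (fun z => ∑ m ∈ s, cf m * w (z + (τ m : ℝ))) z r - I := by
      rw [hv, Real.circleAverage_fun_sub (circleInt_of_contOn (wsum_cont hcw s cf τ) hr h)
        (circleIntegrable_const _ _ _), Real.circleAverage_const]
    rw [h2]
    exact sub_le_sub_right h1 I
  have hvf : Continuous (fun x : ℝ => v (x : ℂ)) := by
    simp only [hvr]
    fun_prop
  have hvper : Function.Periodic (fun x : ℝ => v (x : ℂ)) 1 := by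
    intro x
    show v ((x + 1 : ℝ) : ℂ) = v (x : ℂ)
    rw [hvr, hvr]
    congr 1
    apply Finset.sum_congr rfl
    intro m _
    rw [add_right_comm, hper]
  have hvint : ∫ t in (0:ℝ)..1, v (t : ℂ) = 0 := by
    simp only [hvr]
    rw [intervalIntegral.integral_sub (Continuous.intervalIntegrable (by fun_prop) _ _) (by simp),
      intervalIntegral.integral_finsetSum (fun m _ => Continuous.intervalIntegrable (by fun_prop) _ _)]
    have : ∀ m ∈ s, ∫ t in (0:ℝ)..1, cf m * u (t + m * ω) = cf m * I := by
      intro m _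
      rw [intervalIntegral.integral_const_mul, intervalIntegral.integral_comp_add_right (fun t => u t)]
      congr 1
      have := hper.intervalIntegral_add_eq (m * ω) 0
      rw [zero_add] at this
      rw [zero_add, hI, ← this, add_comm]
    rw [Finset.sum_congr rfl this, ← Finset.sum_mul, hcf1]
    simp
  set ρ := (Y ^ 2)⁻¹ with hρ
  have hρ0 : 0 < ρ := by positivity
  have hρ4 : ρ ≤ 1 / 4 := by
    rw [hρ, inv_eq_one_div]
    apply one_div_le_one_div_of_le (by norm_num)
    nlinarith
  have hCY : C * (Y ^ 25)⁻¹ ≤ ρ ^ 4 := by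
    have e : ρ ^ 4 = Y ^ 17 * (Y ^ 25)⁻¹ := by
      rw [hρ]; field_simp
    rw [e]
    apply mul_le_mul_of_nonneg_right _ (by positivity)
    calc C ≤ Y := hYC
      _ ≤ Y ^ 17 := le_self_pow₀ (by linarith) (by norm_num)
  have hv2 : ∀ z : ℂ, |z.im| ≤ ρ → v z ≤ 5 * B * ρ := by
    intro z hz
    refine (hup ρ hρ0 (by linarith) z hz).trans ?_
    have : C * (Y ^ 25)⁻¹ / ρ ≤ B * ρ := by
      rw [div_le_iff₀ hρ0]
      refine hCY.trans ?_
      have h1 : ρ ^ 2 ≤ 1 := by nlinarith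
      nlinarith [sq_nonneg ρ]
    linarith
  have hv1 : ∀ x : ℝ, v (x : ℂ) ≤ 5 * B * ρ ^ 2 := by
    intro x
    refine (hup (ρ ^ 2) (by positivity) (by nlinarith) x (by simp; positivity)).trans ?_
    have : C * (Y ^ 25)⁻¹ / ρ ^ 2 ≤ B * ρ ^ 2 := by
      rw [div_le_iff₀ (by positivity)]
      refine hCY.trans ?_
      have h1 : 0 ≤ ρ ^ 4 := by positivity
      nlinarith
    linarith
  have hloc := fun a => local_bound hvc hvs hB hρ0 (by linarith) hv2 hv1 hvf hvper hvint (inv_pos.mpr hY0) a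
  have hexp : Y⁻¹ / (45 * B * ρ) = Y / (45 * B) := by
    rw [hρ]; field_simp
  rw [hexp] at hloc
  have hglob := global_bound {x : ℝ | v (x : ℂ) ≤ -Y⁻¹} (Real.exp_nonneg _) hρ0 (by linarith) hloc
  have hsubset : {x : ℝ | x ∈ Set.Icc (0:ℝ) 1 ∧ (M : ℝ) ^ (-σ) < |∑ m ∈ s, cf m * u (x + m * ω) - I|} ⊆
      Set.Icc 0 1 ∩ {x : ℝ | v (x : ℂ) ≤ -Y⁻¹} := by
    rintro x ⟨hx1, hx2⟩
    refine ⟨hx1, ?_⟩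
    rw [hlam, ← hvr] at hx2
    show v (x : ℂ) ≤ -Y⁻¹
    have h1 : 5 * B * ρ ^ 2 ≤ Y⁻¹ := by
      have e : Y⁻¹ = Y ^ 3 * ρ ^ 2 := by rw [hρ]; field_simp
      rw [e]
      apply mul_le_mul_of_nonneg_right _ (by positivity)
      calc 5 * B ≤ Y := by linarith
        _ ≤ Y ^ 3 := le_self_pow₀ (by linarith) (by norm_num)
    rcases lt_abs.mp hx2 with h | h
    · have := hv1 x
      linarith
    · linarith
  refine (measure_mono hsubset).trans_lt (hglob.trans_lt ?_)
  rw [ENNReal.ofReal_lt_ofReal_iff (Real.exp_pos _)]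
  have h3 : (3 : ℝ) < Real.exp 2 := by
    have := Real.add_one_lt_exp (x := 2) (by norm_num)
    linarith
  have hYB' : 4 ≤ Y / (90 * B) := by
    rw [le_div_iff₀ (by positivity)]; linarith
  calc 3 * Real.exp (2 - Y / (45 * B)) < Real.exp 2 * Real.exp (2 - Y / (45 * B)) :=
        mul_lt_mul_of_pos_right h3 (Real.exp_pos _)
    _ = Real.exp (2 + (2 - Y / (45 * B))) := (Real.exp_add _ _).symm
    _ ≤ _ := by
        apply Real.exp_le_exp.mpr
        have e1 : Y / (45 * B) = 2 * (Y / (90 * B)) := by field_simp; norm_num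
        have e2 : -(1 / (90 * B)) * Y = -(Y / (90 * B)) := by ring
        rw [e1, e2]
        linarith
end
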